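/- Let (u_ε, m_ε, H̄_ε) ∈ C^∞(𝕋^d)×C^∞(𝕋^d)×ℝ, with m_ε > 0, solve the oscillating mean-field game system: (1/2)|P+∇u_ε(x)|² + V(x, x/ε) = ln(m_ε(x)) + H̄_ε(P) and −div(m_ε(x)(P+∇u_ε(x))) = 0 in 𝕋^d, with ∫_{𝕋^d} u_ε dx = 0 and ∫_{𝕋^d} m_ε dx = 1, and let q ∈ [1,∞). Then there exist α ∈ (0,1), u_0 ∈ C^{0,α}(𝕋^d) ∩ W^{1,q}(𝕋^d) with ∫_{𝕋^d} u_0 dx = 0, u_1 ∈ L^q(𝕋^d; W^{1,q}_#(𝒴^d)/ℝ), m ∈ L^1(𝕋^d×𝒴^d) with ∫_{𝕋^d}∫_{𝒴^d} m dy dx = 1, and H̄(P) ∈ ℝ such that, along a subsequence: u_ε → u_0 in L^∞(𝕋^d); u_ε ⇀ u_0 weakly in W^{1,q}(𝕋^d); ∇u_ε weakly two-scale converges to ∇u_0 + ∇_y u_1 in [L^q(𝕋^d×𝒴^d)]^d; m_ε weakly two-scale converges to m in L^1(𝕋^d×𝒴^d); m_ε ⇀ m_0 := ∫_{𝒴^d}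 m(·,y)dy weakly in L^1(𝕋^d); and H̄_ε(P) → H̄(P) in ℝ. -/

import Mathlib

open MeasureTheory Filter Topology Function

noncomputable section

/-- The unit cell `𝒴^d = [0,1)^d`. -/
def cube (d : ℕ) : Set (Fin d → ℝ) := Set.univ.pi fun _ => Set.Ico (0 : ℝ) 1

/-- `ℤ^d`-periodicity of a function on `ℝ^d`; functions on the torus `𝕋^d`
(and `𝒴^d`-periodic functions) are identified with such functions. -/
def ZPer {d : ℕ} (f : (Fin d → ℝ) → ℝ) : Prop :=
  ∀ (x : Fin d → ℝ) (k : Fin d → ℤ), f (fun i => x i + (k i : ℝ)) = f x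

/-- The `i`-th partial derivative. -/
def pder {d : ℕ} (i : Fin d) (f : (Fin d → ℝ) → ℝ) (x : Fin d → ℝ) : ℝ :=
  fderiv ℝ f x (Pi.single i 1)

/-- `V : 𝕋^d × ℝ^d → ℝ` smooth, `𝒴^d`-periodic in the second variable
(and periodic in the first, i.e. defined on the torus). -/
def SmoothV {d : ℕ} (V : (Fin d → ℝ) → (Fin d → ℝ) → ℝ) : Prop :=
  ContDiff ℝ (⊤ : ℕ∞) (uncurry V) ∧ (∀ y, ZPer fun x => V x y) ∧ (∀ x, ZPer (V x))

/-- `sup_{(x,y) ∈ 𝕋^d × 𝒴^d} V (x,y)` (by periodicity, the sup over all of `ℝ^d × ℝ^d`). -/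
def supV {d : ℕ} (V : (Fin d → ℝ) → (Fin d → ℝ) → ℝ) : ℝ :=
  ⨆ q : (Fin d → ℝ) × (Fin d → ℝ), V q.1 q.2

/-- `inf_{(x,y) ∈ 𝕋^d × 𝒴^d} V (x,y)`. -/
def infV {d : ℕ} (V : (Fin d → ℝ) → (Fin d → ℝ) → ℝ) : ℝ :=
  ⨅ q : (Fin d → ℝ) × (Fin d → ℝ), V q.1 q.2

/-- `(u, m, H)` is a (smooth, positive, normalized) solution of the `ε`-oscillating
MFG system of Problem 1:
`|P+∇u|²/2 + V(x,x/ε) = ln m + H`, `-div(m (P+∇u)) = 0`, `∫ u = 0`, `∫ m = 1`. -/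
def SolvesMFG {d : ℕ} (P : Fin d → ℝ) (V : (Fin d → ℝ) → (Fin d → ℝ) → ℝ)
    (ε : ℝ) (u m : (Fin d → ℝ) → ℝ) (H : ℝ) : Prop :=
  ContDiff ℝ (⊤ : ℕ∞) u ∧ ZPer u ∧ ContDiff ℝ (⊤ : ℕ∞) m ∧ ZPer m ∧ (∀ x, 0 < m x) ∧
  (∀ x, (∑ i, (P i + pder i u x) ^ 2) / 2 + V x (ε⁻¹ • x) = Real.log (m x) + H) ∧
  (∀ x, (∑ i, pder i (fun z => m z * (P i + pder i u z)) x) = 0) ∧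
  (∫ x in cube d, u x) = 0 ∧ (∫ x in cube d, m x) = 1

/-- Admissible test functions for two-scale convergence: `ψ ∈ C^∞(𝕋^d; C^∞_#(𝒴^d))`. -/
def TestFn {d : ℕ} (ψ : (Fin d → ℝ) → (Fin d → ℝ) → ℝ) : Prop :=
  ContDiff ℝ (⊤ : ℕ∞) (uncurry ψ) ∧ (∀ y, ZPer fun x => ψ x y) ∧ (∀ x, ZPer (ψ x))

/-- Weak two-scale convergence of `(w_ε)` to `W` along the sequence of scales `ε`:
`∫_{𝕋^d} w_ε ψ(x, x/ε) dx → ∫_{𝕋^d}∫_{𝒴^d} W ψ dy dx` for every admissible `ψ`. -/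
def TwoScaleW {d : ℕ} (ε : ℕ → ℝ) (w : ℕ → (Fin d → ℝ) → ℝ)
    (W : (Fin d → ℝ) → (Fin d → ℝ) → ℝ) : Prop :=
  ∀ ψ : (Fin d → ℝ) → (Fin d → ℝ) → ℝ, TestFn ψ →
    Tendsto (fun n => ∫ x in cube d, w n x * ψ x ((ε n)⁻¹ • x)) atTop
      (𝓝 (∫ x in cube d, ∫ y in cube d, W x y * ψ x y))

/-- Strong two-scale convergence in `L^p`: weak two-scale convergence together with
convergence of the `L^p` norms. -/
def TwoScaleS {d : ℕ} (ε : ℕ → ℝ) (p : ℝ) (w : ℕ → (Fin d → ℝ) → ℝ)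
    (W : (Fin d → ℝ) → (Fin d → ℝ) → ℝ) : Prop :=
  TwoScaleW ε w W ∧
    Tendsto (fun n => (∫ x in cube d, |w n x| ^ p) ^ (1 / p)) atTop
      (𝓝 ((∫ x in cube d, ∫ y in cube d, |W x y| ^ p) ^ (1 / p)))

/-- Weak convergence in `L^q(𝕋^d)` (tested against bounded measurable functions). -/
def WeakConvCube {d : ℕ} (w : ℕ → (Fin d → ℝ) → ℝ) (W : (Fin d → ℝ) → ℝ) : Prop :=
  ∀ φ : (Fin d → ℝ) → ℝ, Measurable φ → (∃ M : ℝ, ∀ x, |φ x| ≤ M) →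
    Tendsto (fun n => ∫ x in cube d, w n x * φ x) atTop (𝓝 (∫ x in cube d, W x * φ x))

/-- `g` is the `i`-th weak partial derivative of `v` on the torus:
`∫ v ∂_iφ = -∫ g φ` for all smooth periodic `φ`. -/
def WeakPDer {d : ℕ} (i : Fin d) (v g : (Fin d → ℝ) → ℝ) : Prop :=
  ∀ φ : (Fin d → ℝ) → ℝ, ContDiff ℝ (⊤ : ℕ∞) φ → ZPer φ →
    (∫ x in cube d, v x * pder i φ x) = - ∫ x in cube d, g x * φ x

/-- `α`-Hölder continuity. -/
def HolderCont {d : ℕ} (α : ℝ) (f : (Fin d → ℝ) → ℝ) : Prop :=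
  ∃ C : ℝ, ∀ x y, |f x - f y| ≤ C * dist x y ^ α


theorem weakL2_compact {Ω : Type*} [MeasurableSpace Ω] [MeasurableSpace.CountablyGenerated Ω]
    (μ : Measure Ω) [IsFiniteMeasure μ] {κ : Type*} [Countable κ]
    (g : κ → ℕ → Ω → ℝ) (B : κ → ℝ) (hm : ∀ k n, Measurable (g k n))
    (hB : ∀ k n x, |g k n x| ≤ B k) :
    ∃ φ : ℕ → ℕ, StrictMono φ ∧ ∃ h : κ → Ω → ℝ, (∀ k, Measurable (h k)) ∧
      (∀ k, MemLp (h k) 2 μ) ∧ ∀ k, ∀ ψ : Ω → ℝ, MemLp ψ 2 μ →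
        Tendsto (fun n => ∫ x, g k (φ n) x * ψ x ∂μ) atTop (𝓝 (∫ x, h k x * ψ x ∂μ)) := by
  have hmem : ∀ k n, MemLp (g k n) 2 μ := fun k n =>
    MemLp.of_bound (hm k n).aestronglyMeasurable (B k)
      (Eventually.of_forall fun x => by simpa [Real.norm_eq_abs] using hB k n x)
  have : Fact ((2 : ENNReal) ≠ ⊤) := ⟨by simp⟩
  let E := Lp ℝ 2 μ
  let G : κ → ℕ → E := fun k n => (hmem k n).toLp
  obtain ⟨R, hR⟩ : ∃ R : κ → ℝ, ∀ k n, ‖G k n‖ ≤ R k := by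
    refine ⟨fun k => (measureUnivNNReal μ : ℝ) ^ ((2 : ENNReal).toReal)⁻¹ * |B k|, fun k n => ?_⟩
    refine Lp.norm_le_of_ae_bound (abs_nonneg _) ?_
    filter_upwards [(hmem k n).coeFn_toLp] with x hx
    show ‖(G k n : Ω → ℝ) x‖ ≤ _
    rw [hx, Real.norm_eq_abs]
    exact (hB k n x).trans (le_abs_self _)
  let S : κ → Set (WeakDual ℝ E) := fun k =>
    WeakDual.toStrongDual ⁻¹' Metric.closedBall (0 : StrongDual ℝ E) (R k)
  have hS : ∀ k, IsCompact (S k) := fun k => WeakDual.isCompact_closedBall _ _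
  have : ∀ k, CompactSpace (S k) := fun k => isCompact_iff_compactSpace.mp (hS k)
  have : ∀ k, TopologicalSpace.MetrizableSpace (S k) := fun k =>
    WeakDual.metrizable_of_isCompact ℝ E (S k) (hS k)
  let T : ℕ → (∀ k, S k) := fun n k =>
    ⟨StrongDual.toWeakDual (InnerProductSpace.toDual ℝ E (G k n)), by
      show InnerProductSpace.toDual ℝ E (G k n) ∈ Metric.closedBall (0 : StrongDual ℝ E) (R k)
      rw [mem_closedBall_zero_iff]
      have : ‖InnerProductSpace.toDual ℝ E (G k n)‖ = ‖G k n‖ :=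
        LinearIsometryEquiv.norm_map _ _
      exact this.le.trans (hR k n)⟩
  obtain ⟨L, φ, hφ, hL⟩ := CompactSpace.tendsto_subseq T
  let h : κ → E := fun k =>
    (InnerProductSpace.toDual ℝ E).symm (WeakDual.toStrongDual (L k).1)
  refine ⟨φ, hφ, fun k => (Lp.aestronglyMeasurable (h k)).mk _, fun k =>
    (Lp.aestronglyMeasurable (h k)).stronglyMeasurable_mk.measurable, fun k =>
    (Lp.memLp (h k)).ae_eq (Lp.aestronglyMeasurable (h k)).ae_eq_mk, fun k ψ hψ => ?_⟩
  have h1 : Tendsto (fun n => ((T (φ n) k).1 : WeakDual ℝ E) hψ.toLp) atTop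
      (𝓝 ((L k).1 hψ.toLp)) := by
    have := (continuous_subtype_val.tendsto (L k)).comp ((continuous_apply k).tendsto L |>.comp hL)
    exact ((WeakDual.eval_continuous (hψ.toLp)).tendsto _).comp this
  have e1 : ∀ n, ((T (φ n) k).1 : WeakDual ℝ E) hψ.toLp = ∫ x, g k (φ n) x * ψ x ∂μ := by
    intro n
    have : ((T (φ n) k).1 : WeakDual ℝ E) hψ.toLp = inner ℝ (G k (φ n)) (hψ.toLp) := rfl
    rw [this, L2.inner_def]
    refine integral_congr_ae ?_
    filter_upwards [(hmem k (φ n)).coeFn_toLp, hψ.coeFn_toLp] with x h1 h2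
    show inner ℝ ((MemLp.toLp (g k (φ n)) (hmem k (φ n)) : Ω → ℝ) x) _ = _
    rw [h1, h2]; simp [mul_comm]
  have e2 : (L k).1 hψ.toLp = ∫ x, (Lp.aestronglyMeasurable (h k)).mk _ x * ψ x ∂μ := by
    have : (L k).1 hψ.toLp = inner ℝ (h k) (hψ.toLp) := by
      simp only [h, InnerProductSpace.toDual_symm_apply]; rfl
    rw [this, L2.inner_def]
    refine integral_congr_ae ?_
    filter_upwards [(Lp.aestronglyMeasurable (h k)).ae_eq_mk, hψ.coeFn_toLp] with x h1 h2
    rw [← h1, h2]; simp [mul_comm]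
  rw [e2] at h1
  exact h1.congr e1


def clipR (K t : ℝ) : ℝ := max (-K) (min t K)

theorem clipR_abs_le {K : ℝ} (hK : 0 ≤ K) (t : ℝ) : |clipR K t| ≤ K := by
  unfold clipR
  rw [abs_le]
  exact ⟨le_max_left _ _, max_le (by linarith) (min_le_right _ _)⟩

theorem clipR_sub {K : ℝ} (hK : 0 ≤ K) (t : ℝ) : |t - clipR K t| = max (|t| - K) 0 := by
  unfold clipR
  rcases le_total t K with h | h <;> rcases le_total t 0 with h0 | h0 <;>
  rcases le_total (-K) t with h2 | h2 <;>
  simp only [h, h0, h2, min_eq_left, min_eq_right, max_eq_left, max_eq_right, abs_of_nonneg,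
    abs_of_nonpos, sub_self, abs_zero]
  all_goals grind [abs_of_nonneg, abs_of_nonpos]

theorem clipR_sub_clipR {K L : ℝ} (hK : 0 ≤ K) (hKL : K ≤ L) (t : ℝ) :
    |clipR L t - clipR K t| ≤ max (|t| - K) 0 := by
  unfold clipR
  rcases le_total 0 t with h0 | h0 <;>
  grind [abs_of_nonneg, abs_of_nonpos]

theorem clipR_continuous (K : ℝ) : Continuous (clipR K) := by
  unfold clipR; fun_prop

theorem dunford_pettis {Ω : Type*} [MeasurableSpace Ω] [MeasurableSpace.CountablyGenerated Ω]
    (μ : Measure Ω) [IsFiniteMeasure μ] {ι : Type*} [Countable ι]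
    (f : ι → ℕ → Ω → ℝ) (hm : ∀ i n, Measurable (f i n)) (hintg : ∀ i n, Integrable (f i n) μ)
    (hUI : ∀ i, ∀ δ : ℝ, 0 < δ → ∃ K : ℝ, ∀ n, ∫ x, max (|f i n x| - K) 0 ∂μ ≤ δ) :
    ∃ φ : ℕ → ℕ, StrictMono φ ∧ ∃ F : ι → Ω → ℝ, (∀ i, Measurable (F i)) ∧
      (∀ i, Integrable (F i) μ) ∧ ∀ i, ∀ g : Ω → ℝ, Measurable g → (∃ M, ∀ x, |g x| ≤ M) →
        Tendsto (fun n => ∫ x, f i (φ n) x * g x ∂μ) atTop (𝓝 (∫ x, F i x * g x ∂μ)) := by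
  obtain ⟨φ, hφ, h, hhm, hhL, hconv⟩ := weakL2_compact μ
    (fun (k : ι × ℕ) n x => clipR k.2 (f k.1 n x)) (fun k => k.2)
    (fun k n => (clipR_continuous _).measurable.comp (hm _ _))
    (fun k n x => clipR_abs_le (Nat.cast_nonneg _) _)
  have hhint : ∀ k, Integrable (h k) μ := fun k => (hhL k).integrable (by norm_num)
  have hcm : ∀ i (K : ℝ) n, Measurable (fun x => clipR K (f i n x)) :=
    fun i K n => (clipR_continuous _).measurable.comp (hm _ _)
  have hcint : ∀ i (K : ℕ) n, Integrable (fun x => clipR K (f i n x)) μ := fun i K n =>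
    Integrable.of_bound (hcm i K n).aestronglyMeasurable K
      (Eventually.of_forall fun x => by
        simpa [Real.norm_eq_abs] using clipR_abs_le (Nat.cast_nonneg K) (f i n x))
  have hmaxint : ∀ i n (K : ℝ), Integrable (fun x => max (|f i n x| - K) 0) μ := fun i n K =>
    (((hintg i n).abs).sub (integrable_const K)).pos_part
  have hUI' : ∀ i, ∀ δ : ℝ, 0 < δ → ∃ N : ℕ, ∀ K : ℕ, N ≤ K → ∀ n,
      ∫ x, max (|f i n x| - K) 0 ∂μ ≤ δ := by
    intro i δ hδ
    obtain ⟨K0, hK0⟩ := hUI i δ hδ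
    obtain ⟨N, hN⟩ := exists_nat_ge K0
    refine ⟨N, fun K hK n => le_trans ?_ (hK0 n)⟩
    refine integral_mono (hmaxint _ _ _) (hmaxint _ _ _) fun x => ?_
    have : (N : ℝ) ≤ K := by exact_mod_cast hK
    exact max_le_max (by linarith) le_rfl
  have hbdd2 : ∀ g : Ω → ℝ, Measurable g → (∃ M, ∀ x, |g x| ≤ M) → MemLp g 2 μ := by
    rintro g hg ⟨M, hM⟩
    exact MemLp.of_bound hg.aestronglyMeasurable M
      (Eventually.of_forall fun x => by simpa [Real.norm_eq_abs] using hM x)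
  have key : ∀ i (δ : ℝ) (K L : ℕ), K ≤ L → (∀ n, ∫ x, max (|f i n x| - K) 0 ∂μ ≤ δ) →
      ∫ x, |h (i, L) x - h (i, K) x| ∂μ ≤ δ := by
    intro i δ K L hKL hδ
    let ψ : Ω → ℝ := fun x => if 0 ≤ h (i, L) x - h (i, K) x then 1 else -1
    have hψm : Measurable ψ := by
      refine Measurable.ite ?_ measurable_const measurable_const
      exact measurableSet_le measurable_const ((hhm _).sub (hhm _))
    have hψb : ∀ x, |ψ x| ≤ 1 := by
      intro x; simp only [ψ]; split_ifs <;> simp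
    have hψ2 := hbdd2 ψ hψm ⟨1, hψb⟩
    have hb : ∀ {g : Ω → ℝ}, Integrable g μ → Integrable (fun x => g x * ψ x) μ := fun hg =>
      hg.mul_bdd (c := 1) hψm.aestronglyMeasurable (Eventually.of_forall fun x => by
        simpa [Real.norm_eq_abs] using hψb x)
    have t := (hconv (i, L) ψ hψ2).sub (hconv (i, K) ψ hψ2)
    have e : ∫ x, |h (i, L) x - h (i, K) x| ∂μ
        = ∫ x, h (i, L) x * ψ x ∂μ - ∫ x, h (i, K) x * ψ x ∂μ := by
      rw [← integral_sub (hb (hhint _)) (hb (hhint _))]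
      refine integral_congr_ae (Eventually.of_forall fun x => ?_)
      simp only [ψ]
      split_ifs with h0
      · rw [abs_of_nonneg h0]; ring
      · rw [abs_of_neg (not_le.mp h0)]; ring
    rw [e]
    refine le_of_tendsto t (Eventually.of_forall fun n => ?_)
    simp only
    rw [← integral_sub (hb (hcint i L _)) (hb (hcint i K _))]
    refine le_trans (integral_mono ((hb (hcint i L _)).sub (hb (hcint i K _)))
      (hmaxint i (φ n) K) fun x => ?_) (hδ (φ n))
    have h1 := clipR_sub_clipR (K := K) (L := L) (Nat.cast_nonneg _) (by exact_mod_cast hKL)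
      (f i (φ n) x)
    calc clipR L (f i (φ n) x) * ψ x - clipR K (f i (φ n) x) * ψ x
        = (clipR L (f i (φ n) x) - clipR K (f i (φ n) x)) * ψ x := by ring
      _ ≤ |(clipR L (f i (φ n) x) - clipR K (f i (φ n) x)) * ψ x| := le_abs_self _
      _ ≤ |clipR L (f i (φ n) x) - clipR K (f i (φ n) x)| * 1 := by
          rw [abs_mul]; exact mul_le_mul_of_nonneg_left (hψb x) (abs_nonneg _)
      _ ≤ _ := by rw [mul_one]; exact h1
  -- limit in L1
  have hlim : ∀ i, ∃ F : Ω → ℝ, Measurable F ∧ Integrable F μ ∧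
      Tendsto (fun K : ℕ => ∫ x, |h (i, K) x - F x| ∂μ) atTop (𝓝 0) := by
    intro i
    let X : ℕ → (Ω →₁[μ] ℝ) := fun K => (hhint (i, K)).toL1 _
    have hX : CauchySeq X := by
      rw [Metric.cauchySeq_iff']
      intro δ hδ
      obtain ⟨N, hN⟩ := hUI' i (δ / 2) (by linarith)
      refine ⟨N, fun L hL => ?_⟩
      have := key i (δ / 2) N L hL (hN N le_rfl)
      rw [dist_eq_norm]
      simp only [X]
      rw [← Integrable.toL1_sub, L1.norm_of_fun_eq_integral_norm]
      simp only [Real.norm_eq_abs, Pi.sub_apply]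
      linarith
    obtain ⟨Y, hY⟩ := cauchySeq_tendsto_of_complete hX
    obtain ⟨F0, hF0m, hF0e⟩ : ∃ F0 : Ω → ℝ, Measurable F0 ∧ (Y : Ω → ℝ) =ᵐ[μ] F0 :=
      ⟨_, (Lp.aestronglyMeasurable Y).stronglyMeasurable_mk.measurable,
        (Lp.aestronglyMeasurable Y).ae_eq_mk⟩
    have hYi : Integrable F0 μ := (L1.integrable_coeFn Y).congr hF0e
    refine ⟨F0, hF0m, hYi, ?_⟩
    have hYe : hYi.toL1 F0 = Y := by
      refine Lp.ext ?_
      exact (hYi.coeFn_toL1).trans hF0e.symm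
    have h2 := tendsto_iff_norm_sub_tendsto_zero.mp hY
    refine h2.congr fun K => ?_
    simp only [X]
    rw [← hYe, ← Integrable.toL1_sub, L1.norm_of_fun_eq_integral_norm]
    simp only [Real.norm_eq_abs, Pi.sub_apply]
  choose F hFm hFi hFlim using hlim
  refine ⟨φ, hφ, F, hFm, hFi, fun i g hg hgb => ?_⟩
  have hg2 := hbdd2 g hg hgb
  obtain ⟨M0, hM0⟩ := hgb
  let M := max M0 0 + 1
  have hM : ∀ x, |g x| ≤ M := fun x => by
    have := hM0 x; have := le_max_left M0 0; simp only [M]; linarith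
  have hMp : 0 < M := by have := le_max_right M0 0; simp only [M]; linarith
  have hb : ∀ {w : Ω → ℝ}, Integrable w μ → Integrable (fun x => w x * g x) μ := fun hw =>
      hw.mul_bdd (c := M) hg.aestronglyMeasurable (Eventually.of_forall fun x => by
        simpa [Real.norm_eq_abs] using hM x)
  have est : ∀ w w' : Ω → ℝ, Integrable w μ → Integrable w' μ →
      |∫ x, w x * g x ∂μ - ∫ x, w' x * g x ∂μ| ≤ M * ∫ x, |w x - w' x| ∂μ := by
    intro w w' hw hw'
    rw [← integral_sub (hb hw) (hb hw'), ← integral_const_mul]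
    refine (abs_integral_le_integral_abs).trans ?_
    refine integral_mono ((hb hw).sub (hb hw')).abs ((hw.sub hw').abs.const_mul M) fun x => ?_
    simp only
    rw [← sub_mul, abs_mul, mul_comm]
    exact mul_le_mul_of_nonneg_right (hM x) (abs_nonneg _)
  rw [Metric.tendsto_atTop]
  intro η hη
  obtain ⟨N, hN⟩ := hUI' i (η / (3 * M)) (by positivity)
  obtain ⟨N2, hN2⟩ := Metric.tendsto_atTop.mp (hFlim i) (η / (3 * M)) (by positivity)
  let K := max N N2
  obtain ⟨N3, hN3⟩ := Metric.tendsto_atTop.mp (hconv (i, K) g hg2) (η / 3) (by positivity)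
  refine ⟨N3, fun n hn => ?_⟩
  have a1 := est _ _ (hintg i (φ n)) (hcint i K (φ n))
  have a2 := hN3 n hn
  have a3 := est _ _ (hhint (i, K)) (hFi i)
  have a4 := hN2 K (le_max_right _ _)
  have a5 := hN K (le_max_left _ _) (φ n)
  rw [Real.dist_eq] at a2 a4 ⊢
  rw [sub_zero] at a4
  have a4' := lt_of_le_of_lt (le_abs_self _) a4
  simp only [clipR_sub (Nat.cast_nonneg K)] at a1
  have a6 : M * ∫ x, max (|f i (φ n) x| - K) 0 ∂μ ≤ η / 3 := by
    calc _ ≤ M * (η / (3 * M)) := mul_le_mul_of_nonneg_left a5 hMp.le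
      _ = η / 3 := by field_simp
  have a7 : M * ∫ x, |h (i, K) x - F i x| ∂μ < η / 3 := by
    calc _ < M * (η / (3 * M)) := mul_lt_mul_of_pos_left a4' hMp
      _ = η / 3 := by field_simp
  simp only [abs_lt, abs_le] at *
  constructor <;> linarith [a1.1, a1.2, a2.1, a2.2, a3.1, a3.2]


theorem even_pow_tangent {r : ℕ} (hr : Even r) (a b : ℝ) :
    a ^ r + r * a ^ (r - 1) * (b - a) ≤ b ^ r := by
  have hc : ConvexOn ℝ Set.univ (fun x : ℝ => x ^ r) := hr.convexOn_pow
  have hd : HasDerivAt (fun x : ℝ => x ^ r) (r * a ^ (r - 1)) a := hasDerivAt_pow r a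
  rcases lt_trichotomy a b with h | h | h
  · have := hc.le_slope_of_hasDerivAt (Set.mem_univ a) (Set.mem_univ b) h hd
    rw [slope_def_field, le_div_iff₀ (by linarith)] at this
    linarith
  · subst h; simp
  · have := hc.slope_le_of_hasDerivAt (Set.mem_univ b) (Set.mem_univ a) h hd
    rw [slope_def_field, div_le_iff₀ (by linarith)] at this
    linarith

/-- Weak limits of sequences bounded in `L^r` are in `L^r` (`r` even). -/
theorem weak_limit_Lr {Ω : Type*} [MeasurableSpace Ω]
    (μ : Measure Ω) [IsFiniteMeasure μ] (f : ℕ → Ω → ℝ) (F : Ω → ℝ)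
    (hm : ∀ n, Measurable (f n)) (hFm : Measurable F) (hFi : Integrable F μ)
    (hb : ∀ n, ∃ M, ∀ x, |f n x| ≤ M) (r : ℕ) (hr : Even r) (hr0 : r ≠ 0) (C : ℝ)
    (hC : ∀ n, ∫ x, f n x ^ r ∂μ ≤ C)
    (hconv : ∀ g : Ω → ℝ, Measurable g → (∃ M, ∀ x, |g x| ≤ M) →
        Tendsto (fun n => ∫ x, f n x * g x ∂μ) atTop (𝓝 (∫ x, F x * g x ∂μ))) :
    Integrable (fun x => F x ^ r) μ := by
  have hbi : ∀ g : Ω → ℝ, Measurable g → (∃ M, ∀ x, |g x| ≤ M) → Integrable g μ := by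
    rintro g hg ⟨M, hM⟩
    exact Integrable.of_bound hg.aestronglyMeasurable M
      (Eventually.of_forall fun x => by simpa [Real.norm_eq_abs] using hM x)
  have hbpow : ∀ (g : Ω → ℝ) (k : ℕ), (∃ M, ∀ x, |g x| ≤ M) → (∃ M, ∀ x, |g x ^ k| ≤ M) := by
    rintro g k ⟨M, hM⟩
    exact ⟨M ^ k, fun x => by rw [abs_pow]; exact pow_le_pow_left₀ (abs_nonneg _) (hM x) k⟩
  have hodd : Odd (r - 1) := by
    rcases hr with ⟨k, hk⟩
    exact ⟨k - 1, by omega⟩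
  have main : ∀ K : ℕ, ∫ x, (clipR K (F x)) ^ r ∂μ ≤ C := by
    intro K
    set a : Ω → ℝ := fun x => clipR K (F x) with ha
    have ham : Measurable a := (clipR_continuous K).measurable.comp hFm
    have hab : ∃ M, ∀ x, |a x| ≤ M := ⟨K, fun x => clipR_abs_le (Nat.cast_nonneg _) _⟩
    have hgm : Measurable (fun x => r * a x ^ (r - 1)) := (ham.pow_const _).const_mul _
    have hgb : ∃ M, ∀ x, |r * a x ^ (r - 1)| ≤ M := by
      obtain ⟨M, hM⟩ := hbpow a (r - 1) hab
      exact ⟨r * M, fun x => by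
        rw [abs_mul, Nat.abs_cast]; exact mul_le_mul_of_nonneg_left (hM x) (Nat.cast_nonneg _)⟩
    have iar : Integrable (fun x => a x ^ r) μ := hbi _ (ham.pow_const _) (hbpow a r hab)
    have hmulb : ∀ {w : Ω → ℝ}, Integrable w μ → Integrable (fun x => w x * (r * a x ^ (r - 1))) μ := by
      intro w hw
      obtain ⟨M, hM⟩ := hgb
      exact hw.mul_bdd (c := M) hgm.aestronglyMeasurable (Eventually.of_forall fun x => by
        rw [Real.norm_eq_abs]; exact hM x)
    have iaa := hmulb (hbi a ham hab)
    have t := (hconv _ hgm hgb)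
    have hle : ∀ n, ∫ x, f n x * (r * a x ^ (r - 1)) ∂μ ≤
        C - ∫ x, a x ^ r ∂μ + ∫ x, a x * (r * a x ^ (r - 1)) ∂μ := by
      intro n
      have ifn := hmulb (hbi (f n) (hm n) (hb n))
      have h1 : ∫ x, (a x ^ r + f n x * (r * a x ^ (r - 1)) - a x * (r * a x ^ (r - 1))) ∂μ
          ≤ ∫ x, f n x ^ r ∂μ := by
        refine integral_mono ((iar.add ifn).sub iaa)
          (hbi _ ((hm n).pow_const _) (hbpow _ r (hb n))) fun x => ?_
        have := even_pow_tangent hr (a x) (f n x)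
        simp only
        linarith
      have h2 : ∫ x, (a x ^ r + f n x * (r * a x ^ (r - 1)) - a x * (r * a x ^ (r - 1))) ∂μ
          = ∫ x, a x ^ r ∂μ + ∫ x, f n x * (r * a x ^ (r - 1)) ∂μ
            - ∫ x, a x * (r * a x ^ (r - 1)) ∂μ := by
        rw [integral_sub, integral_add iar ifn]
        exacts [iar.add ifn, iaa]
      linarith [hC n]
    have h3 := le_of_tendsto t (Eventually.of_forall hle)
    have h4 : ∫ x, a x * (r * a x ^ (r - 1)) ∂μ ≤ ∫ x, F x * (r * a x ^ (r - 1)) ∂μ := by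
      refine integral_mono iaa (hmulb hFi) fun x => ?_
      simp only
      have hK : (0 : ℝ) ≤ K := Nat.cast_nonneg K
      have hrn : (0 : ℝ) ≤ r := Nat.cast_nonneg r
      rcases le_total 0 (F x) with h0 | h0
      · have h5 : a x ≤ F x := by simp only [ha, clipR]; grind
        have h6 : 0 ≤ a x := by simp only [ha, clipR]; grind
        have h7 : 0 ≤ a x ^ (r - 1) := pow_nonneg h6 _
        exact mul_le_mul_of_nonneg_right h5 (by positivity)
      · have h5 : F x ≤ a x := by simp only [ha, clipR]; grind
        have h6 : a x ≤ 0 := by simp only [ha, clipR]; grind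
        have h7 : a x ^ (r - 1) ≤ 0 := hodd.pow_nonpos h6
        exact mul_le_mul_of_nonpos_right h5 (mul_nonpos_of_nonneg_of_nonpos hrn h7)
    linarith
  -- Fatou
  refine ⟨(hFm.pow_const r).aestronglyMeasurable, ?_⟩
  have hnn : ∀ x : ℝ, 0 ≤ x ^ r := fun x => hr.pow_nonneg x
  rw [hasFiniteIntegral_iff_ofReal (Eventually.of_forall fun x => hnn _)]
  have hlim : ∀ x, Tendsto (fun K : ℕ => ENNReal.ofReal ((clipR K (F x)) ^ r)) atTop
      (𝓝 (ENNReal.ofReal (F x ^ r))) := by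
    intro x
    refine tendsto_const_nhds.congr' ?_
    obtain ⟨N, hN⟩ := exists_nat_ge |F x|
    filter_upwards [eventually_ge_atTop N] with K hK
    have : (N : ℝ) ≤ K := by exact_mod_cast hK
    have h2 : |F x - clipR K (F x)| = 0 := by
      rw [clipR_sub (Nat.cast_nonneg K)]; exact max_eq_right (by linarith)
    have h3 : F x = clipR K (F x) := by linarith [abs_eq_zero.mp h2]
    rw [← h3]
  have hf := lintegral_liminf_le (u := atTop) (μ := μ) (f := fun (K : ℕ) x => ENNReal.ofReal ((clipR K (F x)) ^ r))
    (fun K => (((clipR_continuous K).measurable.comp hFm).pow_const r).ennreal_ofReal)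
  simp only [(hlim _).liminf_eq] at hf
  refine lt_of_le_of_lt (hf.trans ?_) (ENNReal.ofReal_lt_top (r := C))
  refine liminf_le_of_le (by isBoundedDefault) fun b hb => ?_
  obtain ⟨K, hK⟩ := hb.exists
  refine hK.trans ?_
  rw [← ofReal_integral_eq_lintegral_ofReal]
  · exact ENNReal.ofReal_le_ofReal (main K)
  · exact hbi _ (((clipR_continuous K).measurable.comp hFm).pow_const r)
      (hbpow _ r ⟨K, fun x => clipR_abs_le (Nat.cast_nonneg _) _⟩)
  · exact Eventually.of_forall fun x => hnn _



theorem cube_meas (d : ℕ) : MeasurableSet (cube d) :=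
  MeasurableSet.univ_pi fun _ => measurableSet_Ico

theorem cube_vol (d : ℕ) : volume (cube d) = 1 := by
  unfold cube; rw [Real.volume_pi_Ico]; simp

instance cube_prob (d : ℕ) : IsProbabilityMeasure (volume.restrict (cube d)) :=
  ⟨by rw [Measure.restrict_apply_univ, cube_vol]⟩

/-- Componentwise fractional part. -/
def fr {d : ℕ} (x : Fin d → ℝ) : Fin d → ℝ := fun i => Int.fract (x i)

theorem fr_mem {d : ℕ} (x : Fin d → ℝ) : fr x ∈ cube d := fun i _ =>
  ⟨Int.fract_nonneg _, Int.fract_lt_one _⟩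

theorem fr_of_mem {d : ℕ} {x : Fin d → ℝ} (hx : x ∈ cube d) : fr x = x := by
  funext i
  exact Int.fract_eq_self.mpr (hx i (Set.mem_univ i))

theorem ZPer.fr {d : ℕ} {f : (Fin d → ℝ) → ℝ} (hf : ZPer f) (x : Fin d → ℝ) :
    f (fr x) = f x := by
  rw [← hf (_root_.fr x) (fun i => ⌊x i⌋)]
  congr 1; funext i; simp [_root_.fr]

theorem ZPer_comp_fr {d : ℕ} (f : (Fin d → ℝ) → ℝ) : ZPer (fun x => f (fr x)) := by
  intro x k
  have : fr (fun i => x i + (k i : ℝ)) = fr x := by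
    funext i; simp [fr]
  simp only [this]

theorem fr_measurable {d : ℕ} : Measurable (fr : (Fin d → ℝ) → (Fin d → ℝ)) := by
  refine measurable_pi_lambda _ fun i => ?_
  exact measurable_fract.comp (measurable_pi_apply i)

theorem ZPer.comp_add {d : ℕ} {f : (Fin d → ℝ) → ℝ} (hf : ZPer f) (a : Fin d → ℝ) :
    ZPer (fun x => f (x + a)) := by
  intro x k
  have := hf (x + a) k
  simp only at this ⊢
  rw [← this]; congr 1; funext i; simp only [Pi.add_apply]; ring

theorem cube_fund (d : ℕ) : IsAddFundamentalDomain
    (Submodule.span ℤ (Set.range (Pi.basisFun ℝ (Fin d)))).toAddSubgroup (cube d) volume := by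
  have := ZSpan.isAddFundamentalDomain' (Pi.basisFun ℝ (Fin d)) volume
  rwa [ZSpan.fundamentalDomain_pi_basisFun] at this

theorem ZPer.vadd {d : ℕ} {f : (Fin d → ℝ) → ℝ} (hf : ZPer f)
    (g : (Submodule.span ℤ (Set.range (Pi.basisFun ℝ (Fin d)))).toAddSubgroup) (x : Fin d → ℝ) :
    f (g +ᵥ x) = f x := by
  obtain ⟨g, hg⟩ := g
  have hg' : g ∈ Submodule.span ℤ (Set.range (Pi.basisFun ℝ (Fin d))) := hg
  rw [Module.Basis.mem_span_iff_repr_mem] at hg'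
  simp only [Pi.basisFun_repr] at hg'
  choose k hk using hg'
  have : ((⟨g, hg⟩ : (Submodule.span ℤ (Set.range (Pi.basisFun ℝ (Fin d)))).toAddSubgroup) +ᵥ x)
      = fun i => x i + (k i : ℝ) := by
    funext i
    have := hk i
    simp only [algebraMap_int_eq, eq_intCast] at this
    rw [this]
    show g i + x i = _
    ring
  rw [this, hf x k]

open scoped Pointwise in
theorem per_int {d : ℕ} {f : (Fin d → ℝ) → ℝ} (hf : ZPer f) (a : Fin d → ℝ) :
    ∫ x in cube d, f (x + a) = ∫ x in cube d, f x := by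
  have h1 : ∫ x in cube d, f (x + a) = ∫ x in (a +ᵥ cube d), f x := by
    have mp : MeasurePreserving (fun x : Fin d → ℝ => x + a) volume volume :=
      measurePreserving_add_right volume a
    have me : MeasurableEmbedding (fun x : Fin d → ℝ => x + a) := measurableEmbedding_addRight a
    have := mp.setIntegral_preimage_emb me f (a +ᵥ cube d)
    rw [← this]
    congr 2
    ext x
    simp only [Set.mem_preimage, Set.mem_vadd_set, vadd_eq_add]
    constructor
    · intro h; exact ⟨x, h, add_comm _ _⟩
    · rintro ⟨y, hy, e⟩
      have : y = x := by
        have : y + a = x + a := by rw [← e, add_comm]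
        exact add_right_cancel this
      rwa [← this]
  rw [h1]
  have hcount : Countable (Submodule.span ℤ (Set.range (Pi.basisFun ℝ (Fin d)))).toAddSubgroup :=
    inferInstanceAs (Countable (Submodule.span ℤ (Set.range (Pi.basisFun ℝ (Fin d)))))
  exact ((cube_fund d).vadd_of_comm a).setIntegral_eq (cube_fund d) hf.vadd

theorem cube_subset_Icc (d : ℕ) : cube d ⊆ Set.Icc (0 : Fin d → ℝ) 1 := fun x hx =>
  ⟨fun i => (hx i (Set.mem_univ i)).1, fun i => (hx i (Set.mem_univ i)).2.le⟩

theorem per_bdd {d : ℕ} {f : (Fin d → ℝ) → ℝ} (hc : Continuous f) (hf : ZPer f) :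
    ∃ M, ∀ x, |f x| ≤ M := by
  obtain ⟨M, hM⟩ := (isCompact_Icc (a := (0 : Fin d → ℝ)) (b := 1)).exists_bound_of_continuousOn
    hc.continuousOn
  exact ⟨M, fun x => by rw [← hf.fr x]; exact hM _ (cube_subset_Icc d (fr_mem x))⟩

theorem cont_int {d : ℕ} {f : (Fin d → ℝ) → ℝ} (hc : Continuous f) :
    Integrable f (volume.restrict (cube d)) :=
  (hc.continuousOn.integrableOn_compact isCompact_Icc).mono_set (cube_subset_Icc d)

theorem bdd_int {Ω : Type*} [MeasurableSpace Ω] {μ : Measure Ω} [IsFiniteMeasure μ] {f : Ω → ℝ}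
    (hm : Measurable f) {M : ℝ} (hM : ∀ x, |f x| ≤ M) : Integrable f μ :=
  Integrable.of_bound hm.aestronglyMeasurable M
      (Eventually.of_forall fun x => by simpa [Real.norm_eq_abs] using hM x)

theorem cont_int_prod {d : ℕ} {f : (Fin d → ℝ) × (Fin d → ℝ) → ℝ} (hc : Continuous f) :
    Integrable f ((volume.restrict (cube d)).prod (volume.restrict (cube d))) := by
  rw [Measure.prod_restrict]
  have : IntegrableOn f (Set.Icc (0 : Fin d → ℝ) 1 ×ˢ Set.Icc (0 : Fin d → ℝ) 1)
      (volume.prod volume) :=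
    hc.continuousOn.integrableOn_compact (isCompact_Icc.prod isCompact_Icc)
  exact this.mono_set (Set.prod_mono (cube_subset_Icc d) (cube_subset_Icc d))

theorem pder_contDiff {d : ℕ} (i : Fin d) {f : (Fin d → ℝ) → ℝ} (hf : ContDiff ℝ (⊤ : ℕ∞) f) :
    ContDiff ℝ (⊤ : ℕ∞) (pder i f) := by
  unfold pder
  exact (hf.fderiv_right (m := (⊤ : ℕ∞)) (by simp)).clm_apply contDiff_const

theorem pder_per {d : ℕ} (i : Fin d) {f : (Fin d → ℝ) → ℝ} (hp : ZPer f) : ZPer (pder i f) := by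
  intro x k
  have : f = fun z => f (z + fun i => (k i : ℝ)) := by
    funext z; exact (hp z k).symm
  unfold pder
  conv_rhs => rw [this]
  rw [fderiv_comp_add_right]
  rfl

theorem hasDerivAt_line {d : ℕ} {f : (Fin d → ℝ) → ℝ} (hf : Differentiable ℝ f)
    (x h : Fin d → ℝ) (t : ℝ) :
    HasDerivAt (fun t : ℝ => f (x + t • h)) (∑ i, h i * pder i f (x + t • h)) t := by
  have h1 : HasDerivAt (fun t : ℝ => x + t • h) h t := by
    simpa using ((hasDerivAt_id t).smul_const h).const_add x
  have h2 := (hf (x + t • h)).hasFDerivAt.comp_hasDerivAt t h1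
  have hval : ∑ i, h i * pder i f (x + t • h) = fderiv ℝ f (x + t • h) h := by
    have hh : h = ∑ i, h i • (Pi.single i 1 : Fin d → ℝ) := by
      funext j
      simp [Finset.sum_apply, Pi.single_apply]
    unfold pder
    generalize fderiv ℝ f (x + t • h) = L
    conv_rhs => rw [hh, map_sum]
    refine Finset.sum_congr rfl fun i _ => ?_
    rw [map_smul, smul_eq_mul]
  rw [hval]
  exact h2

theorem pder_mul {d : ℕ} (i : Fin d) {f g : (Fin d → ℝ) → ℝ} (hf : Differentiable ℝ f)
    (hg : Differentiable ℝ g) (x : Fin d → ℝ) :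
    pder i (fun z => f z * g z) x = f x * pder i g x + pder i f x * g x := by
  unfold pder
  rw [fderiv_fun_mul (hf x) (hg x)]
  simp [mul_comm]

theorem int_pder_zero {d : ℕ} (i : Fin d) {f : (Fin d → ℝ) → ℝ} (hf : ContDiff ℝ (⊤ : ℕ∞) f)
    (hp : ZPer f) : ∫ x in cube d, pder i f x = 0 := by
  have hdf : Differentiable ℝ f := hf.differentiable (by simp)
  have hcont : Continuous (pder i f) := (pder_contDiff i hf).continuous
  let e : Fin d → ℝ := Pi.single i 1
  have h1 : ∀ x, ∫ t in (0 : ℝ)..1, pder i f (x + t • e) = 0 := by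
    intro x
    have hd : ∀ t ∈ Set.uIcc (0 : ℝ) 1, HasDerivAt (fun t : ℝ => f (x + t • e))
        (pder i f (x + t • e)) t := by
      intro t _
      have := hasDerivAt_line hdf x e t
      simpa [e, Pi.single_apply] using this
    rw [intervalIntegral.integral_eq_sub_of_hasDerivAt hd
      (Continuous.intervalIntegrable (by fun_prop) _ _)]
    have := hp x (Pi.single i 1)
    have e2 : (fun j => x j + ((Pi.single i 1 : Fin d → ℤ) j : ℝ)) = x + (1 : ℝ) • e := by
      funext j; by_cases hj : j = i
      · subst hj; simp [e]
      · simp [e, hj]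
    rw [e2] at this
    rw [this]; simp
  have h2 : ∫ x in cube d, ∫ t in (0 : ℝ)..1, pder i f (x + t • e) = 0 := by simp [h1]
  obtain ⟨M, hM⟩ := per_bdd hcont (pder_per i hp)
  simp only [intervalIntegral.integral_of_le zero_le_one] at h2
  rw [integral_integral_swap (f := fun x t => pder i f (x + t • e))] at h2
  · simp only [per_int (pder_per i hp)] at h2
    simpa using h2
  · refine bdd_int ?_ (M := M) fun p => hM _
    exact Continuous.measurable (by unfold Function.uncurry; fun_prop)

theorem ibp_per {d : ℕ} (i : Fin d) {f g : (Fin d → ℝ) → ℝ} (hf : ContDiff ℝ (⊤ : ℕ∞) f)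
    (hfp : ZPer f) (hg : ContDiff ℝ (⊤ : ℕ∞) g) (hgp : ZPer g) :
    ∫ x in cube d, f x * pder i g x = - ∫ x in cube d, pder i f x * g x := by
  have h := int_pder_zero i (hf.mul hg) (fun x k => by
    show f _ * g _ = f _ * g _
    rw [hfp x k, hgp x k])
  have hdf : Differentiable ℝ f := hf.differentiable (by simp)
  have hdg : Differentiable ℝ g := hg.differentiable (by simp)
  have h1 := (pder_contDiff i hf).continuous
  have h2 := (pder_contDiff i hg).continuous
  have h3 := hf.continuous
  have h4 := hg.continuous
  have e : ∀ x, pder i (fun z => f z * g z) x = f x * pder i g x + pder i f x * g x := fun x =>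
    pder_mul i hdf hdg x
  simp only [e] at h
  rw [integral_add (cont_int (by fun_prop)) (cont_int (by fun_prop))] at h
  linarith

/-- sum of absolute values of the partial derivatives -/
def gsum {d : ℕ} (u : (Fin d → ℝ) → ℝ) (x : Fin d → ℝ) : ℝ := ∑ i, |pder i u x|

theorem gsum_cont {d : ℕ} {u : (Fin d → ℝ) → ℝ} (hu : ContDiff ℝ (⊤ : ℕ∞) u) :
    Continuous (gsum u) := by
  unfold gsum
  have := fun i => (pder_contDiff i hu).continuous
  fun_prop

theorem gsum_per {d : ℕ} {u : (Fin d → ℝ) → ℝ} (hu : ZPer u) : ZPer (gsum u) := by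
  intro x k
  unfold gsum
  refine Finset.sum_congr rfl fun i _ => ?_
  rw [pder_per i hu x k]

theorem gsum_nonneg {d : ℕ} (u : (Fin d → ℝ) → ℝ) (x) : 0 ≤ gsum u x :=
  Finset.sum_nonneg fun _ _ => abs_nonneg _

theorem diff_le_gsum {d : ℕ} {u : (Fin d → ℝ) → ℝ} (hu : ContDiff ℝ (⊤ : ℕ∞) u)
    (x h : Fin d → ℝ) (c : ℝ) (hc : ∀ i, |h i| ≤ c) :
    |u (x + h) - u x| ≤ c * ∫ t in (0 : ℝ)..1, gsum u (x + t • h) := by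
  have hdf : Differentiable ℝ u := hu.differentiable (by simp)
  have hcont := fun i => (pder_contDiff i hu).continuous
  have hgc := gsum_cont hu
  have h1 := intervalIntegral.integral_eq_sub_of_hasDerivAt (a := 0) (b := 1)
    (fun t _ => hasDerivAt_line hdf x h t) (Continuous.intervalIntegrable (by fun_prop) _ _)
  simp only [one_smul, zero_smul, add_zero] at h1
  rw [← h1, ← intervalIntegral.integral_const_mul]
  refine (intervalIntegral.abs_integral_le_integral_abs zero_le_one).trans ?_
  refine intervalIntegral.integral_mono_on zero_le_one
    (Continuous.intervalIntegrable (by fun_prop) _ _)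
    (Continuous.intervalIntegrable (by fun_prop) _ _) fun t _ => ?_
  refine (Finset.abs_sum_le_sum_abs _ _).trans ?_
  unfold gsum
  rw [Finset.mul_sum]
  refine Finset.sum_le_sum fun i _ => ?_
  rw [abs_mul]
  exact mul_le_mul_of_nonneg_right (hc i) (abs_nonneg _)



theorem V_bdd {d : ℕ} {V : (Fin d → ℝ) → (Fin d → ℝ) → ℝ} (hV : SmoothV V) :
    ∃ B, 0 ≤ B ∧ ∀ x y, |V x y| ≤ B := by
  obtain ⟨M, hM⟩ := ((isCompact_Icc (a := (0 : Fin d → ℝ)) (b := 1)).prod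
    (isCompact_Icc (a := (0 : Fin d → ℝ)) (b := 1))).exists_bound_of_continuousOn
    hV.1.continuous.continuousOn
  refine ⟨max M 0, le_max_right _ _, fun x y => le_trans ?_ (le_max_left _ _)⟩
  have e1 : V (fr x) y = V x y := (hV.2.1 y).fr x
  have e2 : V (fr x) (fr y) = V (fr x) y := (hV.2.2 (fr x)).fr y
  rw [← e1, ← e2]
  exact hM (fr x, fr y) ⟨cube_subset_Icc d (fr_mem x), cube_subset_Icc d (fr_mem y)⟩

theorem energy {d : ℕ} {P : Fin d → ℝ} {V : (Fin d → ℝ) → (Fin d → ℝ) → ℝ} {ε : ℝ}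
    {u m : (Fin d → ℝ) → ℝ} {H : ℝ} (hs : SolvesMFG P V ε u m H) :
    ∫ x in cube d, m x * ∑ i, (P i + pder i u x) ^ 2 ≤ ∑ i, P i ^ 2 := by
  obtain ⟨hu, hup, hm, hmp, hpos, hHJ, hdiv, hu0, hm1⟩ := hs
  have hcu := fun i => (pder_contDiff i hu).continuous
  have hcm := hm.continuous
  have hw : ∀ i, ContDiff ℝ (⊤ : ℕ∞) (fun z => m z * (P i + pder i u z)) := fun i =>
    hm.mul (contDiff_const.add (pder_contDiff i hu))
  have hwp : ∀ i, ZPer (fun z => m z * (P i + pder i u z)) := fun i x k => by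
    show m _ * (P i + pder i u _) = m _ * (P i + pder i u _)
    rw [hmp x k, pder_per i hup x k]
  have hc2 := fun i => (pder_contDiff i (hw i)).continuous
  have hcu0 := hu.continuous
  have key : ∫ x in cube d, ∑ i, (m x * (P i + pder i u x)) * pder i u x = 0 := by
    rw [integral_finsetSum _ fun i _ => cont_int (by fun_prop)]
    simp only [ibp_per _ (hw _) (hwp _) hu hup]
    rw [Finset.sum_neg_distrib, ← integral_finsetSum _ fun i _ => cont_int (by fun_prop)]
    simp only [← Finset.sum_mul, hdiv]
    simp
  have e1 : ∫ x in cube d, m x * ∑ i, (P i + pder i u x) ^ 2 =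
      (∫ x in cube d, ∑ i, (m x * (P i + pder i u x)) * pder i u x) +
      ∫ x in cube d, m x * ∑ i, (P i + pder i u x) * P i := by
    rw [← integral_add (cont_int (by fun_prop)) (cont_int (by fun_prop))]
    refine integral_congr_ae (Eventually.of_forall fun x => ?_)
    simp only [Finset.mul_sum]
    rw [← Finset.sum_add_distrib]
    refine Finset.sum_congr rfl fun i _ => by ring
  have e2 : ∫ x in cube d, m x * ∑ i, (P i + pder i u x) * P i ≤
      ∫ x in cube d, ((1/2) * (m x * ∑ i, (P i + pder i u x) ^ 2) + (1/2) * (∑ i, P i ^ 2) * m x) := by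
    refine integral_mono (cont_int (by fun_prop)) (cont_int (by fun_prop)) fun x => ?_
    have : ∑ i, (P i + pder i u x) * P i ≤
        (1/2) * (∑ i, (P i + pder i u x) ^ 2) + (1/2) * ∑ i, P i ^ 2 := by
      rw [Finset.mul_sum, Finset.mul_sum, ← Finset.sum_add_distrib]
      refine Finset.sum_le_sum fun i _ => ?_
      nlinarith [sq_nonneg (pder i u x)]
    have := mul_le_mul_of_nonneg_left this (hpos x).le
    simp only
    linarith
  rw [integral_add (cont_int (by fun_prop)) (cont_int (by fun_prop)), integral_const_mul,
    integral_const_mul, hm1] at e2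
  linarith

theorem m_eq {d : ℕ} {P : Fin d → ℝ} {V : (Fin d → ℝ) → (Fin d → ℝ) → ℝ} {ε : ℝ}
    {u m : (Fin d → ℝ) → ℝ} {H : ℝ} (hs : SolvesMFG P V ε u m H) (x) :
    m x = Real.exp ((∑ i, (P i + pder i u x) ^ 2) / 2 + V x (ε⁻¹ • x) - H) := by
  obtain ⟨hu, hup, hm, hmp, hpos, hHJ, hdiv, hu0, hm1⟩ := hs
  rw [hHJ x, add_sub_cancel_right, Real.exp_log (hpos x)]

theorem entropy {d : ℕ} {P : Fin d → ℝ} {V : (Fin d → ℝ) → (Fin d → ℝ) → ℝ} {ε : ℝ}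
    {u m : (Fin d → ℝ) → ℝ} {H B : ℝ} (hV : SmoothV V) (hB : ∀ x y, |V x y| ≤ B)
    (hs : SolvesMFG P V ε u m H) :
    ∫ x in cube d, m x * Real.log (m x) ≤ (∑ i, P i ^ 2) / 2 + B - H := by
  have hen := energy hs
  obtain ⟨hu, hup, hm, hmp, hpos, hHJ, hdiv, hu0, hm1⟩ := hs
  have hcu := fun i => (pder_contDiff i hu).continuous
  have hcm := hm.continuous
  have hcl : Continuous (fun x => Real.log (m x)) := hcm.log fun x => (hpos x).ne'
  have e : ∫ x in cube d, m x * Real.log (m x) ≤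
      ∫ x in cube d, ((1/2) * (m x * ∑ i, (P i + pder i u x) ^ 2) + (B - H) * m x) := by
    refine integral_mono (cont_int (by fun_prop)) (cont_int (by fun_prop)) fun x => ?_
    have h1 := hHJ x
    have h2 := (abs_le.mp (hB x (ε⁻¹ • x))).2
    have h3 : Real.log (m x) ≤ (1/2) * (∑ i, (P i + pder i u x) ^ 2) + (B - H) := by linarith
    have := mul_le_mul_of_nonneg_left h3 (hpos x).le
    simp only
    linarith
  rw [integral_add (cont_int (by fun_prop)) (cont_int (by fun_prop)), integral_const_mul,
    integral_const_mul, hm1] at e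
  linarith

theorem H_bound {d : ℕ} {P : Fin d → ℝ} {V : (Fin d → ℝ) → (Fin d → ℝ) → ℝ} {ε : ℝ}
    {u m : (Fin d → ℝ) → ℝ} {H B : ℝ} (hV : SmoothV V) (hB : ∀ x y, |V x y| ≤ B)
    (hs : SolvesMFG P V ε u m H) :
    -B ≤ H ∧ H ≤ (∑ i, P i ^ 2) / 2 + B := by
  have hent := entropy hV hB hs
  have hme := m_eq hs
  obtain ⟨hu, hup, hm, hmp, hpos, hHJ, hdiv, hu0, hm1⟩ := hs
  have hcm := hm.continuous
  have hcl : Continuous (fun x => Real.log (m x)) := hcm.log fun x => (hpos x).ne'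
  constructor
  · have : ∫ x in cube d, Real.exp (-B - H) ≤ ∫ x in cube d, m x := by
      refine integral_mono (cont_int (by fun_prop)) (cont_int (by fun_prop)) fun x => ?_
      show _ ≤ m x
      rw [hme x]
      refine Real.exp_le_exp.mpr ?_
      have h2 := (abs_le.mp (hB x (ε⁻¹ • x))).1
      have : 0 ≤ ∑ i, (P i + pder i u x) ^ 2 := Finset.sum_nonneg fun i _ => sq_nonneg _
      linarith
    rw [hm1] at this
    simp at this
    linarith
  · have : ∫ x in cube d, (m x - 1) ≤ ∫ x in cube d, m x * Real.log (m x) := by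
      refine integral_mono (cont_int (by fun_prop)) (cont_int (by fun_prop)) fun x => ?_
      have h1 := Real.one_sub_inv_le_log_of_pos (hpos x)
      have := mul_le_mul_of_nonneg_left h1 (hpos x).le
      rw [mul_sub, mul_inv_cancel₀ (hpos x).ne', mul_one] at this
      exact this
    rw [integral_sub (cont_int hcm) (cont_int continuous_const), hm1] at this
    simp at this
    linarith

/-- bound constants -/
theorem apriori {d : ℕ} (P : Fin d → ℝ) {V : (Fin d → ℝ) → (Fin d → ℝ) → ℝ} (hV : SmoothV V) :
    ∃ C : ℝ, ∃ Cr : ℕ → ℝ, ∀ (ε : ℝ) (u m : (Fin d → ℝ) → ℝ) (H : ℝ), SolvesMFG P V ε u m H →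
      |H| ≤ C ∧ (∫ x in cube d, m x * Real.log (m x) ≤ C) ∧
      ∀ r : ℕ, ∫ x in cube d, gsum u x ^ r ≤ Cr r := by
  obtain ⟨B, hB0, hB⟩ := V_bdd hV
  have hP0 : 0 ≤ ∑ i, P i ^ 2 := Finset.sum_nonneg fun i _ => sq_nonneg _
  set C1 := (∑ i, P i ^ 2) / 2 + B with hC1
  set c := ∑ i, (|P i| + 1) with hc
  refine ⟨C1 + B, fun r => 2 ^ r * r.factorial * Real.exp (c / 2) * Real.exp (C1 + B),
    fun ε u m H hs => ?_⟩
  have hH := H_bound hV hB hs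
  have hent := entropy hV hB hs
  have hme := m_eq hs
  refine ⟨abs_le.mpr ⟨by linarith, by linarith⟩, by linarith, fun r => ?_⟩
  obtain ⟨hu, hup, hm, hmp, hpos, hHJ, hdiv, hu0, hm1⟩ := hs
  have hcm := hm.continuous
  have hcg := gsum_cont hu
  have : ∫ x in cube d, gsum u x ^ r ≤
      ∫ x in cube d, 2 ^ r * r.factorial * Real.exp (c / 2) * Real.exp (C1 + B) * m x := by
    refine integral_mono (cont_int (by fun_prop)) (cont_int (by fun_prop)) fun x => ?_
    have h1 : gsum u x ≤ c + ∑ i, (P i + pder i u x) ^ 2 := by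
      rw [hc, ← Finset.sum_add_distrib]
      unfold gsum
      refine Finset.sum_le_sum fun i _ => ?_
      have : |pder i u x| ≤ |P i + pder i u x| + |P i| := by
        have := abs_sub (P i + pder i u x) (P i)
        simpa using this
      have h2 : |P i + pder i u x| ≤ 1 + (P i + pder i u x) ^ 2 := by
        rw [← sq_abs]; nlinarith [sq_nonneg (|P i + pder i u x| - 1), abs_nonneg (P i + pder i u x)]
      linarith
    have h2 := Real.pow_div_factorial_le_exp (gsum u x / 2) (by have := gsum_nonneg u x; positivity) r
    have h3 : Real.exp (gsum u x / 2) ≤ Real.exp (c / 2) * Real.exp (C1 + B) * m x := by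
      rw [hme x, ← Real.exp_add, ← Real.exp_add]
      refine Real.exp_le_exp.mpr ?_
      have h2 := (abs_le.mp (hB x (ε⁻¹ • x))).1
      linarith
    have h4 := h2.trans h3
    rw [div_pow, div_div, div_le_iff₀ (by positivity)] at h4
    show gsum u x ^ r ≤ _
    linarith
  rw [integral_const_mul, hm1, mul_one] at this
  exact this



open scoped Pointwise in
theorem scale_int {d : ℕ} {E : (Fin d → ℝ) → ℝ} (hc : Continuous E) (hp : ZPer E)
    (h0 : ∀ x, 0 ≤ E x) (b : Fin d → ℝ) {s : ℝ} (hs : 0 < s) (hs1 : s ≤ 1) :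
    s ^ d * ∫ z in cube d, E (b + s • z) ≤ ∫ x in cube d, E x := by
  have h1 := Measure.setIntegral_comp_smul_of_pos volume (fun x => E (x + b)) (cube d) hs
  have h2 : ∫ z in cube d, E (b + s • z) = (s ^ d)⁻¹ * ∫ x in s • cube d, E (x + b) := by
    rw [Module.finrank_fin_fun, smul_eq_mul] at h1
    rw [← h1]
    refine integral_congr_ae (Eventually.of_forall fun x => ?_)
    simp only [add_comm]
  have hsd : 0 < s ^ d := by positivity
  rw [h2, ← mul_assoc, mul_inv_cancel₀ hsd.ne', one_mul, ← per_int hp b]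
  refine setIntegral_mono_set (cont_int (by fun_prop)) (Eventually.of_forall fun x => h0 _) ?_
  refine HasSubset.Subset.eventuallyLE ?_
  rintro _ ⟨x, hx, rfl⟩ i hi
  have := hx i hi
  simp only [Pi.smul_apply, smul_eq_mul, Set.mem_Ico] at this ⊢
  exact ⟨mul_nonneg hs.le this.1, by nlinarith [this.1, this.2]⟩

theorem scale_bound {d : ℕ} {D : (Fin d → ℝ) → ℝ} (hc : Continuous D) (hp : ZPer D)
    (h0 : ∀ x, 0 ≤ D x) (b : Fin d → ℝ) {s : ℝ} (hs : 0 < s) (hs1 : s ≤ 1) :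
    ∫ z in cube d, D (b + s • z) ≤ s ^ (-(1/2) : ℝ) * (1 + ∫ x in cube d, D x ^ (2 * d + 2)) := by
  set σ := Real.sqrt s with hσ
  have hσ0 : 0 < σ := Real.sqrt_pos.mpr hs
  have hσ1 : σ ≤ 1 := Real.sqrt_le_one.mpr hs1
  have hσs : σ ^ 2 = s := Real.sq_sqrt hs.le
  have hr : s ^ (-(1/2) : ℝ) = σ⁻¹ := by
    rw [Real.rpow_neg hs.le, hσ, Real.sqrt_eq_rpow]
  have key : ∀ t : ℝ, 0 ≤ t → t ≤ σ⁻¹ + σ ^ (2 * d + 1) * t ^ (2 * d + 2) := by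
    intro t ht
    by_cases h : t ≤ σ⁻¹
    · have : 0 ≤ σ ^ (2 * d + 1) * t ^ (2 * d + 2) := by positivity
      linarith
    · push Not at h
      have h1 : 1 ≤ σ * t := by
        have := mul_lt_mul_of_pos_left h hσ0
        rw [mul_inv_cancel₀ hσ0.ne'] at this; exact this.le
      have h2 : 1 ≤ (σ * t) ^ (2 * d + 1) := one_le_pow₀ h1
      have h3 : t * 1 ≤ t * (σ * t) ^ (2 * d + 1) := mul_le_mul_of_nonneg_left h2 ht
      have h4 : t * (σ * t) ^ (2 * d + 1) = σ ^ (2 * d + 1) * t ^ (2 * d + 2) := by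
        rw [mul_pow]; ring
      have : 0 < σ⁻¹ := by positivity
      linarith
  have hK : 0 ≤ ∫ x in cube d, D x ^ (2 * d + 2) :=
    integral_nonneg fun x => pow_nonneg (h0 x) _
  have h1 : ∫ z in cube d, D (b + s • z) ≤
      ∫ z in cube d, (σ⁻¹ + σ ^ (2 * d + 1) * D (b + s • z) ^ (2 * d + 2)) :=
    integral_mono (cont_int (by fun_prop)) (cont_int (by fun_prop)) fun z => key _ (h0 _)
  rw [integral_add (cont_int (by fun_prop)) (cont_int (by fun_prop)), integral_const_mul] at h1
  have h2 := scale_int (E := fun x => D x ^ (2 * d + 2)) (by fun_prop)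
    (fun x k => by simp only; rw [hp x k]) (fun x => pow_nonneg (h0 x) _) b hs hs1
  have e : σ ^ (2 * d + 1) = σ * s ^ d := by rw [← hσs]; ring
  rw [e, mul_assoc] at h1
  have h3 := mul_le_mul_of_nonneg_left h2 hσ0.le
  have h4 : σ ≤ σ⁻¹ := hσ1.trans (one_le_inv_iff₀.mpr ⟨hσ0, hσ1⟩)
  have h5 := mul_le_mul_of_nonneg_right h4 hK
  rw [hr]
  simp only [integral_const, probReal_univ, one_smul] at h1
  linarith

theorem morrey_pt {d : ℕ} {u : (Fin d → ℝ) → ℝ} (hu : ContDiff ℝ (⊤ : ℕ∞) u) (hp : ZPer u)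
    (c a : Fin d → ℝ) (ha : a ∈ Set.Icc (0 : Fin d → ℝ) 1) {l : ℝ} (hl : 0 < l) (hl1 : l ≤ 1) :
    |u (c + l • a) - ∫ z in cube d, u (c + l • z)| ≤
      2 * l ^ ((1/2) : ℝ) * (1 + ∫ x in cube d, gsum u x ^ (2 * d + 2)) := by
  set K := ∫ x in cube d, gsum u x ^ (2 * d + 2) with hKdef
  have hcu := hu.continuous
  have hgc := gsum_cont hu
  have hgp := gsum_per hp
  obtain ⟨Mg, hMg⟩ := per_bdd hgc hgp
  have e1 : u (c + l • a) - ∫ z in cube d, u (c + l • z) =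
      ∫ z in cube d, (u (c + l • a) - u (c + l • z)) := by
    rw [integral_sub (cont_int (by fun_prop)) (cont_int (by fun_prop))]
    simp
  have e2 : |∫ z in cube d, (u (c + l • a) - u (c + l • z))| ≤
      ∫ z in cube d, |u (c + l • a) - u (c + l • z)| := abs_integral_le_integral_abs
  have e3 : ∫ z in cube d, |u (c + l • a) - u (c + l • z)| ≤
      ∫ z in cube d, l * ∫ t in Set.Ioc (0 : ℝ) 1, gsum u ((c + l • a) + t • (l • (z - a))) := by
    refine setIntegral_mono_on (cont_int (by fun_prop)) ?_ (cube_meas d) fun z hz => ?_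
    · refine Integrable.const_mul ?_ _
      refine Integrable.integral_prod_left (f := fun p : (Fin d → ℝ) × ℝ =>
        gsum u ((c + l • a) + p.2 • (l • (p.1 - a)))) (bdd_int ?_ fun p => hMg _)
      exact Continuous.measurable (by fun_prop)
    · have := diff_le_gsum hu (c + l • a) (l • (z - a)) l (fun i => by
        have h1 := hz i (Set.mem_univ i)
        have h2 := ha.1 i
        have h3 := ha.2 i
        simp only [Pi.smul_apply, smul_eq_mul, Pi.sub_apply, Pi.zero_apply, Pi.one_apply,
          Set.mem_Ico] at *
        rw [abs_mul, abs_of_pos hl]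
        have : |z i - a i| ≤ 1 := abs_le.mpr ⟨by linarith, by linarith⟩
        nlinarith)
      rw [intervalIntegral.integral_of_le zero_le_one] at this
      rw [abs_sub_comm]
      have e0 : c + l • a + l • (z - a) = c + l • z := by rw [smul_sub]; abel
      rw [e0] at this
      exact this
  have e4 : ∫ z in cube d, l * ∫ t in Set.Ioc (0 : ℝ) 1, gsum u ((c + l • a) + t • (l • (z - a))) =
      l * ∫ t in Set.Ioc (0 : ℝ) 1, ∫ z in cube d,
        gsum u ((c + (l * (1 - t)) • a) + (t * l) • z) := by
    rw [integral_const_mul, integral_integral_swap]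
    · congr 1
      refine integral_congr_ae (Eventually.of_forall fun t => ?_)
      refine integral_congr_ae (Eventually.of_forall fun z => ?_)
      simp only
      congr 1
      funext i
      simp only [Pi.add_apply, Pi.smul_apply, Pi.sub_apply, smul_eq_mul]
      ring
    · refine bdd_int ?_ (M := Mg) fun p => hMg _
      exact Continuous.measurable (by unfold Function.uncurry; fun_prop)
  have hintg : IntervalIntegrable (fun t : ℝ => t ^ (-(1/2) : ℝ)) volume 0 1 :=
    intervalIntegral.intervalIntegrable_rpow' (by norm_num)
  rw [intervalIntegrable_iff_integrableOn_Ioc_of_le zero_le_one] at hintg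
  have e5 : ∫ t in Set.Ioc (0 : ℝ) 1, ∫ z in cube d,
        gsum u ((c + (l * (1 - t)) • a) + (t * l) • z) ≤
      ∫ t in Set.Ioc (0 : ℝ) 1, t ^ (-(1/2) : ℝ) * (l ^ (-(1/2) : ℝ) * (1 + K)) := by
    refine setIntegral_mono_on ?_ (hintg.mul_const _) measurableSet_Ioc fun t ht => ?_
    · refine Integrable.integral_prod_left (f := fun p : ℝ × (Fin d → ℝ) =>
        gsum u ((c + (l * (1 - p.1)) • a) + (p.1 * l) • p.2)) (bdd_int ?_ fun p => hMg _)
      exact Continuous.measurable (by fun_prop)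
    · have := scale_bound hgc hgp (gsum_nonneg u) (c + (l * (1 - t)) • a) (s := t * l)
        (mul_pos ht.1 hl) (by nlinarith [ht.1, ht.2])
      rw [Real.mul_rpow ht.1.le hl.le, mul_assoc] at this
      exact this
  have e6 : ∫ t in Set.Ioc (0 : ℝ) 1, t ^ (-(1/2) : ℝ) * (l ^ (-(1/2) : ℝ) * (1 + K)) =
      2 * (l ^ (-(1/2) : ℝ) * (1 + K)) := by
    rw [integral_mul_const, ← intervalIntegral.integral_of_le zero_le_one,
      integral_rpow (Or.inl (by norm_num))]
    norm_num
  have e7 : l * l ^ (-(1/2) : ℝ) = l ^ ((1/2) : ℝ) := by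
    conv_lhs => rw [← Real.rpow_one_add' hl.le (by norm_num)]
    norm_num
  rw [e1]
  refine e2.trans (e3.trans ?_)
  rw [e4]
  refine (mul_le_mul_of_nonneg_left (e5.trans e6.le) hl.le).trans ?_
  rw [← e7]; apply le_of_eq; ring

theorem morrey_holder {d : ℕ} {u : (Fin d → ℝ) → ℝ} (hu : ContDiff ℝ (⊤ : ℕ∞) u) (hp : ZPer u)
    {K : ℝ} (hK : ∫ x in cube d, gsum u x ^ (2 * d + 2) ≤ K) (x y : Fin d → ℝ) :
    |u x - u y| ≤ 4 * (1 + K) * dist x y ^ ((1/2) : ℝ) ∧ |u x - u y| ≤ 4 * (1 + K) := by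
  have hK0 : 0 ≤ ∫ x in cube d, gsum u x ^ (2 * d + 2) :=
    integral_nonneg fun x => pow_nonneg (gsum_nonneg u x) _
  have hK' : 0 ≤ K := hK0.trans hK
  have small : ∀ x y : Fin d → ℝ, dist x y ≤ 1 →
      |u x - u y| ≤ 4 * (1 + K) * dist x y ^ ((1/2) : ℝ) := by
    intro x y h1
    rcases (dist_nonneg (x := x) (y := y)).eq_or_lt with h | h
    · have : x = y := dist_eq_zero.mp h.symm
      subst this
      simp
    · set l := dist x y with hl
      have aux : ∀ w : Fin d → ℝ, (∀ i, w i = x i ∨ w i = y i) →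
          |u w - ∫ z in cube d, u ((x ⊓ y) + l • z)| ≤ 2 * l ^ ((1/2) : ℝ) * (1 + K) := by
        intro w hw
        have hw2 : w = (x ⊓ y) + l • (l⁻¹ • (w - x ⊓ y)) := by
          rw [smul_smul, mul_inv_cancel₀ h.ne', one_smul]; abel
        have := morrey_pt hu hp (x ⊓ y) (l⁻¹ • (w - x ⊓ y)) ?_ h h1
        · rw [← hw2] at this
          refine this.trans ?_
          gcongr
        · have hd : ∀ i, |x i - y i| ≤ l := fun i => by
            have := dist_le_pi_dist x y i
            rwa [Real.dist_eq] at this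
          have hA : ∀ i, 0 ≤ w i - min (x i) (y i) ∧ w i - min (x i) (y i) ≤ l := fun i => by
            have := abs_le.mp (hd i)
            rcases hw i with e | e <;> rw [e] <;> rcases min_cases (x i) (y i) with ⟨e1, e2⟩ | ⟨e1, e2⟩ <;>
              rw [e1] <;> constructor <;> linarith
          constructor
          · intro i
            exact mul_nonneg (by positivity) (hA i).1
          · intro i
            show l⁻¹ * (w i - min (x i) (y i)) ≤ 1
            rw [inv_mul_le_iff₀ h]; linarith [(hA i).2]
      have a1 := aux x fun i => Or.inl rfl
      have a2 := aux y fun i => Or.inr rfl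
      have := abs_sub_le (u x) (∫ z in cube d, u ((x ⊓ y) + l • z)) (u y)
      rw [abs_sub_comm (∫ z in cube d, u ((x ⊓ y) + l • z)) (u y)] at this
      linarith
  have b2 : |u x - u y| ≤ 4 * (1 + K) := by
    rw [← hp.fr x, ← hp.fr y]
    have hd : dist (fr x) (fr y) ≤ 1 := by
      rw [dist_pi_le_iff zero_le_one]
      intro i
      have h1 := fr_mem x i (Set.mem_univ i)
      have h2 := fr_mem y i (Set.mem_univ i)
      rw [Real.dist_eq, abs_le]
      constructor <;> linarith [h1.1, h1.2, h2.1, h2.2]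
    refine (small _ _ hd).trans ?_
    have : dist (fr x) (fr y) ^ ((1/2) : ℝ) ≤ 1 := Real.rpow_le_one dist_nonneg hd (by norm_num)
    nlinarith
  refine ⟨?_, b2⟩
  by_cases h : dist x y ≤ 1
  · exact small x y h
  · push Not at h
    have : 1 ≤ dist x y ^ ((1/2) : ℝ) := Real.one_le_rpow h.le (by norm_num)
    nlinarith



theorem ascoli_per {d : ℕ} (u : ℕ → (Fin d → ℝ) → ℝ) (hp : ∀ n, ZPer (u n)) (C : ℝ)
    (hH : ∀ n x y, |u n x - u n y| ≤ C * dist x y ^ ((1/2) : ℝ)) (hb : ∀ n x, |u n x| ≤ C) :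
    ∃ φ : ℕ → ℕ, StrictMono φ ∧ ∃ u₀ : (Fin d → ℝ) → ℝ, ZPer u₀ ∧
      (∀ x y, |u₀ x - u₀ y| ≤ C * dist x y ^ ((1/2) : ℝ)) ∧
      ∀ δ > 0, ∀ᶠ k in atTop, ∀ x, |u (φ k) x - u₀ x| ≤ δ := by
  have hC0 : 0 ≤ C := (abs_nonneg _).trans (hb 0 0)
  have hmod : Tendsto (fun t : ℝ => C * t ^ ((1/2) : ℝ)) (𝓝 0) (𝓝 0) := by
    have : Continuous (fun t : ℝ => C * t ^ ((1/2) : ℝ)) :=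
      continuous_const.mul (Real.continuous_rpow_const (by norm_num))
    have := this.tendsto 0
    simpa using this
  have hcont : ∀ n, Continuous (u n) := by
    intro n
    rw [Metric.continuous_iff']
    intro a δ hδ
    have h1 : Tendsto (fun x : Fin d → ℝ => C * dist x a ^ ((1/2) : ℝ)) (𝓝 a) (𝓝 0) := by
      refine hmod.comp ?_
      have : Continuous (fun x : Fin d → ℝ => dist x a) := by fun_prop
      simpa using this.tendsto a
    filter_upwards [h1.eventually_lt_const hδ] with x hx
    rw [Real.dist_eq]
    exact (hH n x a).trans_lt hx
  let X := Set.Icc (0 : Fin d → ℝ) 1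
  have : CompactSpace X := isCompact_iff_compactSpace.mp isCompact_Icc
  let f : ℕ → BoundedContinuousFunction X ℝ := fun n =>
    BoundedContinuousFunction.mkOfCompact ⟨fun x => u n x, (hcont n).comp continuous_subtype_val⟩
  have hf : ∀ n x, f n x = u n x := fun n x => rfl
  have hcomp : IsCompact (closure (Set.range f)) := by
    refine BoundedContinuousFunction.arzela_ascoli (Set.Icc (-C) C) isCompact_Icc _ ?_ ?_
    · rintro _ x ⟨n, rfl⟩
      exact abs_le.mp (hb n x)
    · refine Metric.equicontinuous_of_continuity_modulus (fun t : ℝ => C * t ^ ((1/2) : ℝ)) hmod _ ?_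
      rintro x y ⟨_, n, rfl⟩
      rw [Real.dist_eq]
      exact hH n x y
  obtain ⟨g, -, φ, hφ, hlim⟩ := hcomp.tendsto_subseq (x := f)
    (fun n => subset_closure (Set.mem_range_self n))
  have hmem : ∀ x : Fin d → ℝ, fr x ∈ X := fun x => cube_subset_Icc d (fr_mem x)
  let u₀ : (Fin d → ℝ) → ℝ := fun x => g ⟨fr x, hmem x⟩
  have hunif : ∀ δ > 0, ∀ᶠ k in atTop, ∀ x, |u (φ k) x - u₀ x| ≤ δ := by
    intro δ hδ
    filter_upwards [Metric.tendsto_nhds.mp hlim δ hδ] with k hk x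
    have := (BoundedContinuousFunction.dist_coe_le_dist (f := f (φ k)) (g := g) ⟨fr x, hmem x⟩).trans hk.le
    rw [Real.dist_eq, hf] at this
    simp only [(hp (φ k)).fr x] at this
    exact this
  have hpt : ∀ x, Tendsto (fun k => u (φ k) x) atTop (𝓝 (u₀ x)) := by
    intro x
    rw [Metric.tendsto_nhds]
    intro δ hδ
    filter_upwards [hunif (δ/2) (by positivity)] with k hk
    rw [Real.dist_eq]
    linarith [hk x]
  refine ⟨φ, hφ, u₀, ?_, ?_, hunif⟩
  · intro x k
    refine tendsto_nhds_unique (hpt _) ?_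
    simp only [(hp _) x k]
    exact hpt x
  · intro x y
    exact le_of_tendsto' ((hpt x).sub (hpt y)).abs fun k => hH (φ k) x y



/-- the restricted product measure -/
abbrev cc (d : ℕ) : Measure ((Fin d → ℝ) × (Fin d → ℝ)) :=
  (volume.restrict (cube d)).prod (volume.restrict (cube d))

theorem cc_ae_mem (d : ℕ) : ∀ᵐ p ∂(cc d), p.1 ∈ cube d ∧ p.2 ∈ cube d := by
  rw [cc, Measure.prod_restrict]
  filter_upwards [ae_restrict_mem ((cube_meas d).prod (cube_meas d))] with p hp
  exact hp

/-- open cube -/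
def ocube (d : ℕ) : Set (Fin d → ℝ) := Set.univ.pi fun _ => Set.Ioo (0 : ℝ) 1

theorem ocube_open (d : ℕ) : IsOpen (ocube d) :=
  isOpen_set_pi Set.finite_univ fun _ _ => isOpen_Ioo

theorem ocube_sub (d : ℕ) : ocube d ⊆ cube d := fun x hx i hi => ⟨(hx i hi).1.le, (hx i hi).2⟩

theorem ocube_ae_eq (d : ℕ) : (ocube d : Set (Fin d → ℝ)) =ᵐ[volume] cube d := by
  have h1 := Measure.univ_pi_Ioo_ae_eq_Icc (μ := fun _ : Fin d => (volume : Measure ℝ))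
    (f := 0) (g := 1)
  have h2 := Measure.univ_pi_Ico_ae_eq_Icc (μ := fun _ : Fin d => (volume : Measure ℝ))
    (f := 0) (g := 1)
  exact h1.trans h2.symm

theorem ocube_ae (d : ℕ) : ∀ᵐ x ∂(volume.restrict (cube d)), x ∈ ocube d := by
  rw [← Measure.restrict_congr_set (ocube_ae_eq d)]
  exact ae_restrict_mem (ocube_open d).measurableSet

/-- unfolding of `w` at scale `ε` -/
def unf {d : ℕ} (ε : ℝ) (w : (Fin d → ℝ) → ℝ) (p : (Fin d → ℝ) × (Fin d → ℝ)) : ℝ :=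
  w (p.1 + ε • fr (p.2 - ε⁻¹ • p.1))

theorem unf_meas {d : ℕ} (ε : ℝ) {w : (Fin d → ℝ) → ℝ} (hw : Measurable w) :
    Measurable (unf ε w) := by
  unfold unf
  have := fr_measurable (d := d)
  fun_prop

theorem unf_int {d : ℕ} (ε : ℝ) {w : (Fin d → ℝ) → ℝ} (hw : Measurable w)
    (hwb : ∃ M, ∀ x, |w x| ≤ M) {ψ : (Fin d → ℝ) × (Fin d → ℝ) → ℝ} (hψ : Measurable ψ)
    (hψb : ∃ M, ∀ p, |ψ p| ≤ M) (hper : ∀ x, ZPer fun y => ψ (x, y)) :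
    ∫ p, unf ε w p * ψ p ∂(cc d) =
      ∫ p, w (p.1 + ε • p.2) * ψ (p.1, p.2 + ε⁻¹ • p.1) ∂(cc d) := by
  obtain ⟨M1, hM1⟩ := hwb
  obtain ⟨M2, hM2⟩ := hψb
  have hM10 : 0 ≤ M1 := (abs_nonneg _).trans (hM1 0)
  have hfr := fr_measurable (d := d)
  rw [integral_prod, integral_prod]
  · refine integral_congr_ae (Eventually.of_forall fun x => ?_)
    simp only
    have hz : ZPer (fun z => w (x + ε • fr z) * ψ (x, z + ε⁻¹ • x)) := by
      intro z k
      have h1 := ZPer_comp_fr (fun z => w (x + ε • z)) z k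
      have h2 := (hper x).comp_add (ε⁻¹ • x) z k
      simp only at h1 h2 ⊢
      rw [h1, h2]
    have := per_int hz (-(ε⁻¹ • x))
    simp only [← sub_eq_add_neg, sub_add_cancel] at this
    unfold unf
    simp only
    rw [this]
    refine setIntegral_congr_fun (cube_meas d) fun z hz => ?_
    simp only [fr_of_mem hz]
  · refine bdd_int (M := M1 * M2) (by fun_prop) fun p => ?_
    rw [abs_mul]
    exact mul_le_mul (hM1 _) (hM2 _) (abs_nonneg _) hM10
  · refine bdd_int (M := M1 * M2) ((unf_meas ε hw).mul hψ) fun p => ?_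
    rw [abs_mul]
    exact mul_le_mul (hM1 _) (hM2 _) (abs_nonneg _) hM10

theorem shear_int {d : ℕ} (ε : ℝ) {F : (Fin d → ℝ) × (Fin d → ℝ) → ℝ} (hF : Measurable F)
    (hFb : ∃ M, ∀ p, |F p| ≤ M) (hper : ∀ z, ZPer fun x => F (x, z)) :
    ∫ p, F (p.1 + ε • p.2, p.2) ∂(cc d) = ∫ p, F p ∂(cc d) := by
  obtain ⟨M, hM⟩ := hFb
  rw [integral_prod_symm, integral_prod_symm]
  · refine integral_congr_ae (Eventually.of_forall fun z => ?_)
    exact per_int (hper z) (ε • z)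
  · exact bdd_int (M := M) hF hM
  · exact bdd_int (M := M) (by fun_prop) fun p => hM _

theorem fst_int {d : ℕ} {f : (Fin d → ℝ) → ℝ} (hf : Integrable f (volume.restrict (cube d))) :
    ∫ p, f p.1 ∂(cc d) = ∫ x in cube d, f x := by
  rw [integral_prod _ (hf.comp_fst _)]
  simp

theorem unf_mean {d : ℕ} (ε : ℝ) {w : (Fin d → ℝ) → ℝ} (hw : Measurable w)
    (hwb : ∃ M, ∀ x, |w x| ≤ M) (hwp : ZPer w) :
    ∫ p, unf ε w p ∂(cc d) = ∫ x in cube d, w x := by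
  have h1 := unf_int ε hw hwb (ψ := fun _ => 1) measurable_const ⟨1, by simp⟩
    (fun x y k => rfl)
  simp only [mul_one] at h1
  obtain ⟨M, hM⟩ := hwb
  rw [h1, shear_int ε (F := fun p => w p.1) (by fun_prop) ⟨M, fun p => hM _⟩ (fun z => hwp),
    fst_int (bdd_int hw hM)]

theorem unif_mod {d : ℕ} {ψ : (Fin d → ℝ) × (Fin d → ℝ) → ℝ} (hψ : Continuous ψ)
    (hper : ∀ x, ZPer fun y => ψ (x, y)) {δ : ℝ} (hδ : 0 < δ) :
    ∃ η > 0, ∀ x x' : Fin d → ℝ, x ∈ cube d → x' ∈ cube d → dist x x' < η →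
      ∀ y, |ψ (x, y) - ψ (x', y)| < δ := by
  have hcpt : IsCompact (Set.Icc (0 : Fin d → ℝ) 1 ×ˢ Set.Icc (0 : Fin d → ℝ) 1) :=
    isCompact_Icc.prod isCompact_Icc
  have := hcpt.uniformContinuousOn_of_continuous hψ.continuousOn
  rw [Metric.uniformContinuousOn_iff] at this
  obtain ⟨η, hη, h⟩ := this δ hδ
  refine ⟨η, hη, fun x x' hx hx' hd y => ?_⟩
  have e1 := (hper x).fr y
  have e2 := (hper x').fr y
  rw [← e1, ← e2]
  have := h (x, fr y) ⟨cube_subset_Icc d hx, cube_subset_Icc d (fr_mem y)⟩ (x', fr y)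
    ⟨cube_subset_Icc d hx', cube_subset_Icc d (fr_mem y)⟩ (by simpa [Prod.dist_eq] using hd)
  rwa [Real.dist_eq] at this

theorem bdd_cube {d : ℕ} {ψ : (Fin d → ℝ) × (Fin d → ℝ) → ℝ} (hψ : Continuous ψ)
    (hper : ∀ x, ZPer fun y => ψ (x, y)) : ∃ M, ∀ x y, |ψ (fr x, y)| ≤ M := by
  obtain ⟨M, hM⟩ := ((isCompact_Icc (a := (0 : Fin d → ℝ)) (b := 1)).prod
    (isCompact_Icc (a := (0 : Fin d → ℝ)) (b := 1))).exists_bound_of_continuousOn hψ.continuousOn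
  refine ⟨M, fun x y => ?_⟩
  have e1 := (hper (fr x)).fr y
  rw [← e1]
  exact hM _ ⟨cube_subset_Icc d (fr_mem x), cube_subset_Icc d (fr_mem y)⟩

/-- The oscillation remainder tends to zero. -/
theorem osc_tendsto {d : ℕ} {ε : ℕ → ℝ} (hε : ∀ n, 0 < ε n) (hε0 : Tendsto ε atTop (𝓝 0))
    {ψ : (Fin d → ℝ) × (Fin d → ℝ) → ℝ} (hψ : Continuous ψ)
    (hper : ∀ x, ZPer fun y => ψ (x, y)) :
    Tendsto (fun n => ∫ p, |ψ (fr (p.1 - ε n • p.2), p.2 + (ε n)⁻¹ • fr (p.1 - ε n • p.2)) -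
      ψ (fr p.1, (ε n)⁻¹ • p.1)| ∂(cc d)) atTop (𝓝 0) := by
  obtain ⟨M, hM⟩ := bdd_cube hψ hper
  have hfr := fr_measurable (d := d)
  have hψm := hψ.measurable
  have := tendsto_integral_of_dominated_convergence (μ := cc d) (f := fun _ => (0 : ℝ))
    (F := fun n p => |ψ (fr (p.1 - ε n • p.2), p.2 + (ε n)⁻¹ • fr (p.1 - ε n • p.2)) -
      ψ (fr p.1, (ε n)⁻¹ • p.1)|) (fun _ => 2 * M) ?_ (integrable_const _) ?_ ?_
  · simpa using this
  · intro n
    exact Measurable.aestronglyMeasurable (by fun_prop)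
  · intro n
    refine Eventually.of_forall fun p => ?_
    rw [Real.norm_eq_abs, abs_abs]
    refine (abs_sub _ _).trans ?_
    linarith [hM (p.1 - ε n • p.2) (p.2 + (ε n)⁻¹ • fr (p.1 - ε n • p.2)), hM p.1 ((ε n)⁻¹ • p.1)]
  · have ho : ∀ᵐ p ∂(cc d), p.1 ∈ ocube d :=
      Measure.quasiMeasurePreserving_fst.ae (ocube_ae d)
    filter_upwards [ho, cc_ae_mem d] with p hp hp2
    have hlim : Tendsto (fun n => p.1 - ε n • p.2) atTop (𝓝 p.1) := by
      have := (hε0.smul_const p.2).const_sub p.1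
      simpa using this
    have hin := hlim.eventually ((ocube_open d).mem_nhds hp)
    rw [Metric.tendsto_nhds]
    intro δ hδ
    obtain ⟨η, hη, h⟩ := unif_mod hψ hper hδ
    filter_upwards [hin, Metric.tendsto_nhds.mp hlim η hη] with n h1 h2
    have h3 := ocube_sub d h1
    rw [fr_of_mem h3, fr_of_mem hp2.1, Real.dist_eq, sub_zero, abs_abs]
    have e : p.2 + (ε n)⁻¹ • (p.1 - ε n • p.2) = (ε n)⁻¹ • p.1 := by
      rw [smul_sub, smul_smul, inv_mul_cancel₀ (hε n).ne', one_smul]; abel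
    rw [e]
    exact h _ _ h3 hp2.1 h2 _

/-- Uniform integrability in the form used here. -/
def UI {d : ℕ} (w : ℕ → (Fin d → ℝ) → ℝ) : Prop :=
  ∀ δ : ℝ, 0 < δ → ∃ K : ℝ, ∀ n, ∫ x in cube d, max (|w n x| - K) 0 ≤ δ

/-- Lemma U -/
theorem unf_asymp {d : ℕ} {ε : ℕ → ℝ} (hε : ∀ n, 0 < ε n) (hε0 : Tendsto ε atTop (𝓝 0))
    {w : ℕ → (Fin d → ℝ) → ℝ} (hw : ∀ n, Measurable (w n)) (hwb : ∀ n, ∃ M, ∀ x, |w n x| ≤ M)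
    (hwp : ∀ n, ZPer (w n)) (hUI : UI w)
    {ψ : (Fin d → ℝ) × (Fin d → ℝ) → ℝ} (hψ : Continuous ψ)
    (hper : ∀ x, ZPer fun y => ψ (x, y)) :
    Tendsto (fun n => (∫ x in cube d, w n x * ψ (x, (ε n)⁻¹ • x)) -
      ∫ p, unf (ε n) (w n) p * ψ p ∂(cc d)) atTop (𝓝 0) := by
  obtain ⟨M, hM⟩ := bdd_cube hψ hper
  have hM0 : 0 ≤ M := (abs_nonneg _).trans (hM 0 0)
  have hfr := fr_measurable (d := d)
  have hψm := hψ.measurable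
  have key : ∀ n, (∫ x in cube d, w n x * ψ (x, (ε n)⁻¹ • x)) -
      ∫ p, unf (ε n) (w n) p * ψ p ∂(cc d) =
      - ∫ p, w n p.1 * (ψ (fr (p.1 - ε n • p.2), p.2 + (ε n)⁻¹ • fr (p.1 - ε n • p.2)) -
      ψ (fr p.1, (ε n)⁻¹ • p.1)) ∂(cc d) := by
    intro n
    obtain ⟨W, hW⟩ := hwb n
    have hW0 : 0 ≤ W := (abs_nonneg _).trans (hW 0)
    have hwn := hw n
    have e1 : ∫ p, unf (ε n) (w n) p * ψ p ∂(cc d) =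
        ∫ p, unf (ε n) (w n) p * ψ (fr p.1, p.2) ∂(cc d) := by
      refine integral_congr_ae ?_
      filter_upwards [cc_ae_mem d] with p hp
      rw [fr_of_mem hp.1]
    rw [e1, unf_int (ε n) hwn ⟨W, hW⟩ (ψ := fun p => ψ (fr p.1, p.2)) (by fun_prop)
      ⟨M, fun p => hM _ _⟩ (fun x => hper (fr x))]
    have e2 : ∫ p, w n (p.1 + ε n • p.2) * ψ (fr p.1, p.2 + (ε n)⁻¹ • p.1) ∂(cc d) =
        ∫ p, w n (p.1 + ε n • p.2) * ψ (fr p.1, p.2 + (ε n)⁻¹ • fr p.1) ∂(cc d) := by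
      refine integral_congr_ae ?_
      filter_upwards [cc_ae_mem d] with p hp
      simp only [fr_of_mem hp.1]
    have hbd : ∀ a : Fin d → ℝ, ∀ b c, |w n a * ψ (fr b, c)| ≤ W * M := fun a b c => by
      rw [abs_mul]; exact mul_le_mul (hW _) (hM _ _) (abs_nonneg _) hW0
    have e3 := shear_int (ε n) (F := fun p => w n p.1 *
      ψ (fr (p.1 - ε n • p.2), p.2 + (ε n)⁻¹ • fr (p.1 - ε n • p.2))) (by fun_prop)
      ⟨W * M, fun p => hbd _ _ _⟩ (fun z x k => by
        have h1 := hwp n x k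
        have h2 := (ZPer_comp_fr (fun x => ψ (x, z + (ε n)⁻¹ • x))).comp_add (-(ε n • z)) x k
        simp only [← sub_eq_add_neg] at h1 h2 ⊢
        rw [h1, h2])
    simp only [add_sub_cancel_right] at e3
    simp only
    rw [e2, e3]
    have e4 : ∫ x in cube d, w n x * ψ (x, (ε n)⁻¹ • x) =
        ∫ p, w n p.1 * ψ (fr p.1, (ε n)⁻¹ • p.1) ∂(cc d) := by
      rw [fst_int (f := fun x => w n x * ψ (fr x, (ε n)⁻¹ • x))]
      · refine setIntegral_congr_fun (cube_meas d) fun x hx => ?_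
        simp only [fr_of_mem hx]
      · exact bdd_int (M := W * M) (by fun_prop) fun x => hbd _ _ _
    rw [e4, ← integral_sub, ← integral_neg]
    · refine integral_congr_ae (Eventually.of_forall fun p => ?_)
      simp only; ring
    · exact bdd_int (M := W * M) (by fun_prop) fun x => hbd _ _ _
    · exact bdd_int (M := W * M) (by fun_prop) fun x => hbd _ _ _
  simp only [key]
  rw [Metric.tendsto_nhds]
  intro δ hδ
  obtain ⟨K, hK⟩ := hUI (δ / (2 * (2 * M + 1))) (by positivity)
  have ho := (osc_tendsto hε hε0 hψ hper).const_mul |K|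
  rw [mul_zero] at ho
  filter_upwards [ho.eventually_lt_const (half_pos hδ)] with n hn
  obtain ⟨W, hW⟩ := hwb n
  have hwn := hw n
  rw [Real.dist_eq, sub_zero, abs_neg]
  set R : (Fin d → ℝ) × (Fin d → ℝ) → ℝ := fun p =>
    ψ (fr (p.1 - ε n • p.2), p.2 + (ε n)⁻¹ • fr (p.1 - ε n • p.2)) -
      ψ (fr p.1, (ε n)⁻¹ • p.1) with hR
  have hRm : Measurable R := by fun_prop
  have hRb : ∀ p, |R p| ≤ 2 * M := fun p => by
    refine (abs_sub _ _).trans ?_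
    linarith [hM (p.1 - ε n • p.2) (p.2 + (ε n)⁻¹ • fr (p.1 - ε n • p.2)), hM p.1 ((ε n)⁻¹ • p.1)]
  have hK1 : Integrable (fun x => max (|w n x| - K) 0) (volume.restrict (cube d)) := by
    refine bdd_int (M := W + |K|) (by fun_prop) fun x => ?_
    have := hW x; have := neg_abs_le K; have := abs_nonneg K; have := abs_nonneg (w n x)
    rw [abs_of_nonneg (le_max_right _ _)]
    exact max_le (by linarith) (by linarith)
  have hRi : Integrable (fun p => |R p|) (cc d) := bdd_int (M := 2 * M) (by fun_prop) fun p => by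
    rw [abs_abs]; exact hRb p
  calc |∫ p, w n p.1 * R p ∂(cc d)| ≤ ∫ p, |w n p.1 * R p| ∂(cc d) := abs_integral_le_integral_abs
    _ ≤ ∫ p, (2 * M * max (|w n p.1| - K) 0 + |K| * |R p|) ∂(cc d) := by
        refine integral_mono ?_ ?_ fun p => ?_
        · refine bdd_int (M := W * (2 * M)) (by fun_prop) fun p => ?_
          rw [abs_abs, abs_mul]
          exact mul_le_mul (hW _) (hRb _) (abs_nonneg _) ((abs_nonneg _).trans (hW 0))
        · exact ((hK1.comp_fst _).const_mul _).add (hRi.const_mul _)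
        · have h1 := hRb p
          have h2 := abs_nonneg (R p)
          simp only
          rw [abs_mul]
          have h3 : |w n p.1| ≤ max (|w n p.1| - K) 0 + |K| := by
            have := le_max_left (|w n p.1| - K) 0; have := le_abs_self K; linarith
          have h4 := le_max_right (|w n p.1| - K) 0
          nlinarith
    _ = 2 * M * (∫ x in cube d, max (|w n x| - K) 0) + |K| * ∫ p, |R p| ∂(cc d) := by
        rw [integral_add ((hK1.comp_fst _).const_mul _) (hRi.const_mul _), integral_const_mul,
          integral_const_mul, fst_int hK1]
    _ < δ := by
        have h1 := mul_le_mul_of_nonneg_left (hK n) (by positivity : 0 ≤ 2 * M)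
        have h2 : 2 * M * (δ / (2 * (2 * M + 1))) ≤ δ / 2 := by
          rw [mul_div_assoc', div_le_iff₀ (by positivity)]
          nlinarith
        linarith



/-- rescaled oscillation (corrector) -/
def cor {d : ℕ} (ε : ℝ) (u : (Fin d → ℝ) → ℝ) (x : Fin d → ℝ) : ℝ :=
  ε⁻¹ * (u x - ∫ z in cube d, u (x + ε • z))

theorem avg_cont {d : ℕ} (ε : ℝ) {u : (Fin d → ℝ) → ℝ} (hu : Continuous u) (hp : ZPer u) :
    Continuous (fun x => ∫ z in cube d, u (x + ε • z)) := by
  obtain ⟨M, hM⟩ := per_bdd hu hp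
  refine continuous_of_dominated (bound := fun _ => M) (fun x => ?_) (fun x => ?_)
    (integrable_const _) ?_
  · exact Continuous.aestronglyMeasurable (by fun_prop)
  · exact Eventually.of_forall fun z => hM _
  · exact Eventually.of_forall fun z => by fun_prop

theorem cor_cont {d : ℕ} (ε : ℝ) {u : (Fin d → ℝ) → ℝ} (hu : Continuous u) (hp : ZPer u) :
    Continuous (cor ε u) := by
  unfold cor
  have := avg_cont ε hu hp
  fun_prop

theorem cor_per {d : ℕ} (ε : ℝ) {u : (Fin d → ℝ) → ℝ} (hp : ZPer u) : ZPer (cor ε u) := by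
  intro x k
  unfold cor
  rw [hp x k]
  congr 2
  refine integral_congr_ae (Eventually.of_forall fun z => ?_)
  exact hp.comp_add (ε • z) x k

theorem cor_le {d : ℕ} {ε : ℝ} (hε : ε ≠ 0) {u : (Fin d → ℝ) → ℝ} (hu : ContDiff ℝ (⊤ : ℕ∞) u)
    (hp : ZPer u) (x : Fin d → ℝ) :
    |cor ε u x| ≤ ∫ p, gsum u (x + (p.2 * ε) • p.1)
      ∂((volume.restrict (cube d)).prod (volume.restrict (Set.Ioc (0:ℝ) 1))) := by
  have hcu := hu.continuous
  have hgc := gsum_cont hu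
  obtain ⟨Mg, hMg⟩ := per_bdd hgc (gsum_per hp)
  have hgi : Integrable (fun p : (Fin d → ℝ) × ℝ => gsum u (x + (p.2 * ε) • p.1))
      ((volume.restrict (cube d)).prod (volume.restrict (Set.Ioc (0:ℝ) 1))) :=
    bdd_int (Continuous.measurable (by fun_prop)) fun p => hMg _
  rw [integral_prod _ hgi]
  unfold cor
  have e1 : u x - ∫ z in cube d, u (x + ε • z) = ∫ z in cube d, (u x - u (x + ε • z)) := by
    rw [integral_sub (cont_int (by fun_prop)) (cont_int (by fun_prop))]
    simp
  rw [e1, abs_mul, abs_inv, inv_mul_le_iff₀ (abs_pos.mpr hε), ← integral_const_mul]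
  refine abs_integral_le_integral_abs.trans ?_
  refine setIntegral_mono_on (cont_int (by fun_prop)) (hgi.integral_prod_left.const_mul _)
    (cube_meas d) fun z hz => ?_
  have := diff_le_gsum hu x (ε • z) |ε| (fun i => by
    have h1 := hz i (Set.mem_univ i)
    simp only [Pi.smul_apply, smul_eq_mul, Set.mem_Ico] at *
    rw [abs_mul, abs_of_nonneg h1.1]
    nlinarith [h1.1, h1.2, abs_nonneg ε])
  rw [intervalIntegral.integral_of_le zero_le_one] at this
  rw [abs_sub_comm]
  simp only [smul_smul] at this
  exact this

theorem cor_pow_int {d : ℕ} {ε : ℝ} (hε : ε ≠ 0) {u : (Fin d → ℝ) → ℝ}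
    (hu : ContDiff ℝ (⊤ : ℕ∞) u) (hp : ZPer u) (r : ℕ) :
    ∫ x in cube d, |cor ε u x| ^ r ≤ ∫ x in cube d, gsum u x ^ r := by
  have hcu := hu.continuous
  have hgc := gsum_cont hu
  have hcc := cor_cont ε hcu hp
  obtain ⟨Mg, hMg⟩ := per_bdd hgc (gsum_per hp)
  have hprob : IsProbabilityMeasure (volume.restrict (Set.Ioc (0:ℝ) 1)) := ⟨by simp⟩
  set ν := (volume.restrict (cube d)).prod (volume.restrict (Set.Ioc (0:ℝ) 1)) with hν
  have hbr : ∀ y, |gsum u y ^ r| ≤ Mg ^ r := fun y => by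
    rw [abs_pow]; exact pow_le_pow_left₀ (abs_nonneg _) (hMg y) _
  have hJ : ∀ x, |cor ε u x| ^ r ≤ ∫ p, gsum u (x + (p.2 * ε) • p.1) ^ r ∂ν := by
    intro x
    refine (pow_le_pow_left₀ (abs_nonneg _) (cor_le hε hu hp x) r).trans ?_
    have := (convexOn_pow (𝕜 := ℝ) r).map_integral_le (μ := ν)
      (f := fun p => gsum u (x + (p.2 * ε) • p.1))
      (continuous_pow r).continuousOn isClosed_Ici
      (Eventually.of_forall fun p => gsum_nonneg u _)
      (bdd_int (Continuous.measurable (by fun_prop)) fun p => hMg _)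
      (bdd_int (Continuous.measurable (by unfold Function.comp; fun_prop)) fun p => hbr _)
    exact this
  have hI : Integrable (fun q : (Fin d → ℝ) × ((Fin d → ℝ) × ℝ) =>
      gsum u (q.1 + (q.2.2 * ε) • q.2.1) ^ r) ((volume.restrict (cube d)).prod ν) :=
    bdd_int (Continuous.measurable (by fun_prop)) fun p => hbr _
  have h1 : ∫ x in cube d, |cor ε u x| ^ r ≤
      ∫ x in cube d, ∫ p, gsum u (x + (p.2 * ε) • p.1) ^ r ∂ν :=
    integral_mono (cont_int (by fun_prop)) hI.integral_prod_left hJ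
  refine h1.trans (le_of_eq ?_)
  rw [integral_integral_swap hI]
  have hper : ZPer (fun x => gsum u x ^ r) := fun x k => by
    simp only; rw [gsum_per hp x k]
  simp only [per_int hper]
  simp

theorem UI_of_sq {d : ℕ} {w : ℕ → (Fin d → ℝ) → ℝ} (hc : ∀ n, Continuous (w n)) {C : ℝ}
    (hC : ∀ n, ∫ x in cube d, |w n x| ^ 2 ≤ C) : UI w := by
  intro δ hδ
  have hC0 : 0 ≤ C := (integral_nonneg fun x => by positivity).trans (hC 0)
  refine ⟨(C + 1) / δ, fun n => ?_⟩
  have hcn := hc n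
  have hK : 0 < (C + 1) / δ := by positivity
  have : ∫ x in cube d, max (|w n x| - (C + 1) / δ) 0 ≤
      ∫ x in cube d, ((C + 1) / δ)⁻¹ * |w n x| ^ 2 := by
    refine integral_mono (cont_int (by fun_prop)) (cont_int (by fun_prop)) fun x => ?_
    simp only
    refine max_le ?_ (by positivity)
    rw [inv_mul_eq_div, le_div_iff₀ hK]
    nlinarith [sq_nonneg (|w n x| - (C + 1) / δ), abs_nonneg (w n x)]
  rw [integral_const_mul] at this
  refine this.trans ?_
  rw [inv_mul_le_iff₀ hK, div_mul_cancel₀ _ hδ.ne']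
  linarith [hC n]

theorem UI_of_entropy {d : ℕ} {m : ℕ → (Fin d → ℝ) → ℝ} (hc : ∀ n, Continuous (m n))
    (hpos : ∀ n x, 0 < m n x) {C : ℝ}
    (hC : ∀ n, ∫ x in cube d, m n x * Real.log (m n x) ≤ C) : UI m := by
  intro δ hδ
  set L := (|C| + 1) / δ with hL
  have hL0 : 0 < L := by positivity
  refine ⟨Real.exp L, fun n => ?_⟩
  have hcn := hc n
  have hcl : Continuous (fun x => Real.log (m n x)) := hcn.log fun x => (hpos n x).ne'
  have : ∫ x in cube d, max (|m n x| - Real.exp L) 0 ≤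
      ∫ x in cube d, L⁻¹ * (m n x * Real.log (m n x) + 1) := by
    refine integral_mono (cont_int (by fun_prop)) (cont_int (by fun_prop)) fun x => ?_
    have hp := hpos n x
    have h1 := Real.one_sub_inv_le_log_of_pos hp
    have h2 := mul_le_mul_of_nonneg_left h1 hp.le
    rw [mul_sub, mul_inv_cancel₀ hp.ne', mul_one] at h2
    simp only
    rw [abs_of_pos hp]
    refine max_le ?_ (mul_nonneg (by positivity) (by linarith))
    rw [inv_mul_eq_div, le_div_iff₀ hL0]
    by_cases h : m n x ≤ Real.exp L
    · have : (m n x - Real.exp L) * L ≤ 0 := mul_nonpos_of_nonpos_of_nonneg (by linarith) hL0.le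
      linarith
    · push Not at h
      have h3 : L ≤ Real.log (m n x) := (Real.le_log_iff_exp_le hp).mpr h.le
      have h4 := mul_le_mul_of_nonneg_left h3 hp.le
      have := mul_pos (Real.exp_pos L) hL0
      linarith
  rw [integral_const_mul, integral_add (cont_int (by fun_prop)) (cont_int (by fun_prop))] at this
  refine this.trans ?_
  rw [inv_mul_le_iff₀ hL0, hL, div_mul_cancel₀ _ hδ.ne']
  have := hC n
  have := le_abs_self C
  simp
  linarith

theorem package {d : ℕ} {ι : Type} [Countable ι] {ε : ℕ → ℝ} (w : ι → ℕ → (Fin d → ℝ) → ℝ)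
    (hc : ∀ i n, Continuous (w i n)) (hp : ∀ i n, ZPer (w i n)) (hUI : ∀ i, UI (w i)) :
    ∃ φ : ℕ → ℕ, StrictMono φ ∧ ∃ F : ι → (Fin d → ℝ) × (Fin d → ℝ) → ℝ,
      ∃ f : ι → (Fin d → ℝ) → ℝ,
      (∀ i, Measurable (F i)) ∧ (∀ i, Integrable (F i) (cc d)) ∧
      (∀ i, Measurable (f i)) ∧ (∀ i, Integrable (f i) (volume.restrict (cube d))) ∧
      (∀ i (g : (Fin d → ℝ) × (Fin d → ℝ) → ℝ), Measurable g → (∃ M, ∀ x, |g x| ≤ M) →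
        Tendsto (fun n => ∫ x, unf (ε (φ n)) (w i (φ n)) x * g x ∂(cc d)) atTop
          (𝓝 (∫ x, F i x * g x ∂(cc d)))) ∧
      (∀ i (g : (Fin d → ℝ) → ℝ), Measurable g → (∃ M, ∀ x, |g x| ≤ M) →
        Tendsto (fun n => ∫ x in cube d, w i (φ n) x * g x) atTop
          (𝓝 (∫ x in cube d, f i x * g x))) := by
  have hb := fun i n => per_bdd (hc i n) (hp i n)
  obtain ⟨φ, hφ, F, hF1, hF2, hF3⟩ := dunford_pettis (cc d) (fun i n => unf (ε n) (w i n))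
    (fun i n => unf_meas _ (hc i n).measurable)
    (fun i n => by
      obtain ⟨M, hM⟩ := hb i n
      exact bdd_int (unf_meas _ (hc i n).measurable) fun p => hM _)
    (fun i δ hδ => by
      obtain ⟨K, hK⟩ := hUI i δ hδ
      refine ⟨K, fun n => ?_⟩
      have hcin := hc i n
      refine le_trans (le_of_eq ?_) (hK n)
      have hcont : Continuous (fun x => max (|w i n x| - K) 0) := by fun_prop
      have hper : ZPer (fun x => max (|w i n x| - K) 0) := fun x k => by
        simp only; rw [hp i n x k]
      exact unf_mean (ε n) hcont.measurable (per_bdd hcont hper) hper)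
  obtain ⟨φ', hφ', f, hf1, hf2, hf3⟩ := dunford_pettis (volume.restrict (cube d))
    (fun i n => w i (φ n)) (fun i n => (hc i _).measurable) (fun i n => cont_int (hc i _))
    (fun i δ hδ => by
      obtain ⟨K, hK⟩ := hUI i δ hδ
      exact ⟨K, fun n => hK _⟩)
  refine ⟨φ ∘ φ', hφ.comp hφ', F, f, hF1, hF2, hf1, hf2, fun i g h1 h2 => ?_, hf3⟩
  exact (hF3 i g h1 h2).comp hφ'.tendsto_atTop

/-- convergence against oscillating continuous test functions -/
theorem ts_conv {d : ℕ} {ε : ℕ → ℝ} (hε : ∀ n, 0 < ε n) (hε0 : Tendsto ε atTop (𝓝 0))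
    {w : ℕ → (Fin d → ℝ) → ℝ} (hc : ∀ n, Continuous (w n))
    (hwp : ∀ n, ZPer (w n)) (hUI : UI w) {F : (Fin d → ℝ) × (Fin d → ℝ) → ℝ}
    (hF : ∀ g : (Fin d → ℝ) × (Fin d → ℝ) → ℝ, Measurable g → (∃ M, ∀ x, |g x| ≤ M) →
        Tendsto (fun n => ∫ x, unf (ε n) (w n) x * g x ∂(cc d)) atTop
          (𝓝 (∫ x, F x * g x ∂(cc d))))
    {ψ : (Fin d → ℝ) × (Fin d → ℝ) → ℝ} (hψ : Continuous ψ)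
    (hper : ∀ x, ZPer fun y => ψ (x, y)) :
    Tendsto (fun n => ∫ x in cube d, w n x * ψ (x, (ε n)⁻¹ • x)) atTop
      (𝓝 (∫ p, F p * ψ p ∂(cc d))) := by
  obtain ⟨M, hM⟩ := bdd_cube hψ hper
  have hfr := fr_measurable (d := d)
  have hψm := hψ.measurable
  have h1 := unf_asymp hε hε0 (fun n => (hc n).measurable) (fun n => per_bdd (hc n) (hwp n))
    hwp hUI hψ hper
  have h2 := hF (fun p => ψ (fr p.1, p.2)) (by fun_prop) ⟨M, fun p => hM _ _⟩
  have e : ∀ G : (Fin d → ℝ) × (Fin d → ℝ) → ℝ,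
      ∫ p, G p * ψ (fr p.1, p.2) ∂(cc d) = ∫ p, G p * ψ p ∂(cc d) := by
    intro G
    refine integral_congr_ae ?_
    filter_upwards [cc_ae_mem d] with p hp
    rw [fr_of_mem hp.1]
  simp only [e] at h2
  have := h1.add h2
  simpa using this



theorem UI_R {d : ℕ} {w : ℕ → (Fin d → ℝ) → ℝ} (hw : ∀ n, Measurable (w n))
    (hwb : ∀ n, ∃ M, ∀ x, |w n x| ≤ M) (hUI : UI w)
    {R : ℕ → (Fin d → ℝ) × (Fin d → ℝ) → ℝ} (hRm : ∀ n, Measurable (R n)) {M : ℝ}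
    (hRb : ∀ n p, |R n p| ≤ M) (hR0 : Tendsto (fun n => ∫ p, |R n p| ∂(cc d)) atTop (𝓝 0)) :
    Tendsto (fun n => ∫ p, w n p.1 * R n p ∂(cc d)) atTop (𝓝 0) := by
  have hM0 : 0 ≤ M := (abs_nonneg _).trans (hRb 0 0)
  rw [Metric.tendsto_nhds]
  intro δ hδ
  obtain ⟨K, hK⟩ := hUI (δ / (2 * (M + 1))) (by positivity)
  have ho := hR0.const_mul |K|
  rw [mul_zero] at ho
  filter_upwards [ho.eventually_lt_const (half_pos hδ)] with n hn
  obtain ⟨W, hW⟩ := hwb n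
  have hwn := hw n
  have hRmn := hRm n
  rw [Real.dist_eq, sub_zero]
  have hK1 : Integrable (fun x => max (|w n x| - K) 0) (volume.restrict (cube d)) := by
    refine bdd_int (M := W + |K|) (by fun_prop) fun x => ?_
    have := hW x; have := neg_abs_le K; have := abs_nonneg K; have := abs_nonneg (w n x)
    rw [abs_of_nonneg (le_max_right _ _)]
    exact max_le (by linarith) (by linarith)
  have hRi : Integrable (fun p => |R n p|) (cc d) := bdd_int (M := M) (by fun_prop) fun p => by
    rw [abs_abs]; exact hRb n p
  calc |∫ p, w n p.1 * R n p ∂(cc d)| ≤ ∫ p, |w n p.1 * R n p| ∂(cc d) :=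
        abs_integral_le_integral_abs
    _ ≤ ∫ p, (M * max (|w n p.1| - K) 0 + |K| * |R n p|) ∂(cc d) := by
        refine integral_mono ?_ ?_ fun p => ?_
        · refine bdd_int (M := W * M) (by fun_prop) fun p => ?_
          rw [abs_abs, abs_mul]
          exact mul_le_mul (hW _) (hRb _ _) (abs_nonneg _) ((abs_nonneg _).trans (hW 0))
        · exact ((hK1.comp_fst _).const_mul _).add (hRi.const_mul _)
        · have h1 := hRb n p
          have h2 := abs_nonneg (R n p)
          simp only
          rw [abs_mul]
          have h3 : |w n p.1| ≤ max (|w n p.1| - K) 0 + |K| := by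
            have := le_max_left (|w n p.1| - K) 0; have := le_abs_self K; linarith
          have h4 := le_max_right (|w n p.1| - K) 0
          nlinarith
    _ = M * (∫ x in cube d, max (|w n x| - K) 0) + |K| * ∫ p, |R n p| ∂(cc d) := by
        rw [integral_add ((hK1.comp_fst _).const_mul _) (hRi.const_mul _), integral_const_mul,
          integral_const_mul, fst_int hK1]
    _ < δ := by
        have h1 := mul_le_mul_of_nonneg_left (hK n) hM0
        have h2 : M * (δ / (2 * (M + 1))) ≤ δ / 2 := by
          rw [mul_div_assoc', div_le_iff₀ (by positivity)]
          nlinarith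
        linarith

/-- integration by parts on the cube against a function supported in the open cube -/
theorem ibp_cube {d : ℕ} (i : Fin d) {f ζ : (Fin d → ℝ) → ℝ} (hf : ContDiff ℝ (⊤ : ℕ∞) f)
    (hζ : ContDiff ℝ (⊤ : ℕ∞) ζ) (hcs : HasCompactSupport ζ) (hsup : tsupport ζ ⊆ ocube d) :
    ∫ x in cube d, f x * pder i ζ x = - ∫ x in cube d, pder i f x * ζ x := by
  have hcf := hf.continuous
  have hcζ := hζ.continuous
  have hcpf := (pder_contDiff i hf).continuous
  have hcpζ := (pder_contDiff i hζ).continuous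
  have hcs' : HasCompactSupport (pder i ζ) := hcs.fderiv_apply ℝ _
  have z0 : ∀ x, x ∉ cube d → ζ x = 0 := fun x hx =>
    image_eq_zero_of_notMem_tsupport fun h => hx (ocube_sub d (hsup h))
  have z1 : ∀ x, x ∉ cube d → pder i ζ x = 0 := fun x hx => by
    have : x ∉ tsupport (pder i ζ) := fun h =>
      hx (ocube_sub d (hsup (tsupport_fderiv_apply_subset ℝ _ h)))
    exact image_eq_zero_of_notMem_tsupport this
  rw [setIntegral_eq_integral_of_forall_compl_eq_zero fun x hx => by rw [z1 x hx, mul_zero],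
    setIntegral_eq_integral_of_forall_compl_eq_zero fun x hx => by rw [z0 x hx, mul_zero]]
  refine integral_mul_fderiv_eq_neg_fderiv_mul_of_integrable ?_ ?_ ?_
    (fun x _ => (hf.differentiable (by simp)) x) (fun x _ => (hζ.differentiable (by simp)) x)
  · exact (hcpf.mul hcζ).integrable_of_hasCompactSupport hcs.mul_left
  · exact (hcf.mul hcpζ).integrable_of_hasCompactSupport hcs'.mul_left
  · exact (hcf.mul hcζ).integrable_of_hasCompactSupport hcs.mul_left

theorem pder_scale {d : ℕ} (i : Fin d) {η : (Fin d → ℝ) → ℝ} (hη : ContDiff ℝ (⊤ : ℕ∞) η)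
    (c : ℝ) (x : Fin d → ℝ) : pder i (fun z => η (c • z)) x = c * pder i η (c • x) := by
  unfold pder
  have h1 : HasFDerivAt (fun z : Fin d → ℝ => c • z) (c • ContinuousLinearMap.id ℝ (Fin d → ℝ)) x :=
    (hasFDerivAt_id x).const_smul c
  have h2 := ((hη.differentiable (by simp)) (c • x)).hasFDerivAt.comp x h1
  have h3 : fderiv ℝ (fun z => η (c • z)) x = _ := h2.fderiv
  rw [h3]
  simp

theorem pder_shift {d : ℕ} (i : Fin d) (u : (Fin d → ℝ) → ℝ) (a x : Fin d → ℝ) :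
    pder i (fun z => u (z + a)) x = pder i u (x + a) := by
  unfold pder
  rw [fderiv_comp_add_right]

/-- identity at level n -/
theorem cor_ident {d : ℕ} (i : Fin d) {ε : ℝ} (hε : 0 < ε) {u : (Fin d → ℝ) → ℝ}
    (hu : ContDiff ℝ (⊤ : ℕ∞) u) (hp : ZPer u) {φ η : (Fin d → ℝ) → ℝ}
    (hφ : ContDiff ℝ (⊤ : ℕ∞) φ) (hcs : HasCompactSupport φ) (hsup : tsupport φ ⊆ ocube d)
    (hη : ContDiff ℝ (⊤ : ℕ∞) η) :
    - (∫ x in cube d, cor (-ε) u x * (φ x * pder i η (ε⁻¹ • x))) -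
      ε * (∫ x in cube d, cor (-ε) u x * (pder i φ x * η (ε⁻¹ • x))) =
    - (∫ x in cube d, pder i u x * (φ x * η (ε⁻¹ • x))) +
      ∫ p, pder i u (p.1 + (-ε) • p.2) * (φ p.1 * η (ε⁻¹ • p.1)) ∂(cc d) := by
  set ζ : (Fin d → ℝ) → ℝ := fun x => φ x * η (ε⁻¹ • x) with hζdef
  have hηs : ContDiff ℝ (⊤ : ℕ∞) (fun x : Fin d → ℝ => η (ε⁻¹ • x)) :=
    hη.comp (contDiff_const_smul ε⁻¹)
  have hζ : ContDiff ℝ (⊤ : ℕ∞) ζ := hφ.mul hηs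
  have hζcs : HasCompactSupport ζ := hcs.mul_right
  have hζsup : tsupport ζ ⊆ ocube d := (tsupport_mul_subset_left).trans hsup
  have hcu := hu.continuous
  have hcpu := (pder_contDiff i hu).continuous
  have hcζ := hζ.continuous
  have hcpζ := (pder_contDiff i hζ).continuous
  have hcφ := hφ.continuous
  have hcpφ := (pder_contDiff i hφ).continuous
  have hcη := hη.continuous
  have hcpη := (pder_contDiff i hη).continuous
  have hcc := cor_cont (-ε) hcu hp
  have hpζ : ∀ x, pder i ζ x = φ x * (ε⁻¹ * pder i η (ε⁻¹ • x)) + pder i φ x * η (ε⁻¹ • x) := by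
    intro x
    rw [hζdef, pder_mul i (hφ.differentiable (by simp)) (hηs.differentiable (by simp)),
      pder_scale i hη]
  -- left side
  have L : - (∫ x in cube d, cor (-ε) u x * (φ x * pder i η (ε⁻¹ • x))) -
      ε * (∫ x in cube d, cor (-ε) u x * (pder i φ x * η (ε⁻¹ • x))) =
      (∫ x in cube d, u x * pder i ζ x) -
        ∫ x in cube d, (∫ z in cube d, u (x + (-ε) • z)) * pder i ζ x := by
    have hav := avg_cont (-ε) hcu hp
    rw [← integral_const_mul, ← integral_neg, ← integral_sub (cont_int (by fun_prop))
      (cont_int (by fun_prop)), ← integral_sub (cont_int (by fun_prop)) (cont_int (by fun_prop))]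
    refine integral_congr_ae (Eventually.of_forall fun x => ?_)
    simp only [hpζ, cor]
    field_simp
    ring
  have T1 := ibp_cube i hu hζ hζcs hζsup
  obtain ⟨M, hM⟩ := per_bdd hcu hp
  have hcc1 : Continuous (fun q : (Fin d → ℝ) × (Fin d → ℝ) =>
      u (q.1 + (-ε) • q.2) * pder i ζ q.1) := by fun_prop
  have hcc2 : Continuous (fun q : (Fin d → ℝ) × (Fin d → ℝ) =>
      pder i u (q.1 + (-ε) • q.2) * ζ q.1) := by fun_prop
  have T2 : ∫ x in cube d, (∫ z in cube d, u (x + (-ε) • z)) * pder i ζ x =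
      - ∫ p, pder i u (p.1 + (-ε) • p.2) * ζ p.1 ∂(cc d) := by
    rw [integral_prod_symm _ (cont_int_prod hcc2)]
    simp only [← integral_mul_const]
    rw [integral_integral_swap (cont_int_prod hcc1), ← integral_neg]
    refine integral_congr_ae (Eventually.of_forall fun z => ?_)
    have hsh : ContDiff ℝ (⊤ : ℕ∞) (fun x => u (x + (-ε) • z)) :=
      hu.comp (contDiff_id.add contDiff_const)
    have := ibp_cube i hsh hζ hζcs hζsup
    simp only [pder_shift] at this
    exact this
  rw [L, T1, T2]
  ring



theorem cc_mul {d : ℕ} (f g : (Fin d → ℝ) → ℝ) :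
    ∫ p, f p.1 * g p.2 ∂(cc d) = (∫ x in cube d, f x) * ∫ y in cube d, g y :=
  integral_prod_mul f g

theorem T4_lim {d : ℕ} {ε : ℕ → ℝ} (hε : ∀ n, 0 < ε n) (hε0 : Tendsto ε atTop (𝓝 0))
    {w : ℕ → (Fin d → ℝ) → ℝ} (hc : ∀ n, Continuous (w n))
    (hwp : ∀ n, ZPer (w n)) (hUI : UI w) {f : (Fin d → ℝ) → ℝ}
    (hf : ∀ g : (Fin d → ℝ) → ℝ, Measurable g → (∃ M, ∀ x, |g x| ≤ M) →
        Tendsto (fun n => ∫ x in cube d, w n x * g x) atTop (𝓝 (∫ x in cube d, f x * g x)))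
    {φ η : (Fin d → ℝ) → ℝ} (hφ : Continuous φ) (hη : Continuous η) (hηp : ZPer η) :
    Tendsto (fun n => ∫ p, w n (p.1 + (-ε n) • p.2) * (φ p.1 * η ((ε n)⁻¹ • p.1)) ∂(cc d)) atTop
      (𝓝 (∫ p, f p.1 * (φ p.1 * η p.2) ∂(cc d))) := by
  have hfr := fr_measurable (d := d)
  have hwb := fun n => per_bdd (hc n) (hwp n)
  have hφm := hφ.measurable
  have hηm := hη.measurable
  obtain ⟨Mη, hMη⟩ := per_bdd hη hηp
  have hMη0 : 0 ≤ Mη := (abs_nonneg _).trans (hMη 0)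
  obtain ⟨Mφ, hMφ⟩ := (isCompact_Icc (a := (0 : Fin d → ℝ)) (b := 1)).exists_bound_of_continuousOn
    hφ.continuousOn
  have hMφ' : ∀ x, |φ (fr x)| ≤ Mφ := fun x => hMφ _ (cube_subset_Icc d (fr_mem x))
  have hMφ0 : 0 ≤ Mφ := (abs_nonneg _).trans (hMφ' 0)
  have hbd : ∀ x y, |φ (fr x) * η y| ≤ Mφ * Mη := fun x y => by
    rw [abs_mul]; exact mul_le_mul (hMφ' x) (hMη y) (abs_nonneg _) hMφ0
  set R : ℕ → (Fin d → ℝ) × (Fin d → ℝ) → ℝ := fun n p =>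
    φ (fr (p.1 + ε n • p.2)) * η ((ε n)⁻¹ • fr (p.1 + ε n • p.2)) -
      φ (fr p.1) * η (p.2 + (ε n)⁻¹ • p.1) with hR
  have hRm : ∀ n, Measurable (R n) := fun n => by fun_prop
  have hRb : ∀ n p, |R n p| ≤ 2 * (Mφ * Mη) := fun n p => by
    refine (abs_sub _ _).trans ?_
    linarith [hbd (p.1 + ε n • p.2) ((ε n)⁻¹ • fr (p.1 + ε n • p.2)),
      hbd p.1 (p.2 + (ε n)⁻¹ • p.1)]
  have hR0 : Tendsto (fun n => ∫ p, |R n p| ∂(cc d)) atTop (𝓝 0) := by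
    have := tendsto_integral_of_dominated_convergence (μ := cc d) (f := fun _ => (0 : ℝ))
      (F := fun n p => |R n p|) (fun _ => 2 * (Mφ * Mη))
      (fun n => (hRm n).abs.aestronglyMeasurable) (integrable_const _)
      (fun n => Eventually.of_forall fun p => by
        rw [Real.norm_eq_abs, abs_abs]; exact hRb n p) ?_
    · simpa using this
    · have ho : ∀ᵐ p ∂(cc d), p.1 ∈ ocube d :=
        Measure.quasiMeasurePreserving_fst.ae (ocube_ae d)
      filter_upwards [ho, cc_ae_mem d] with p hp hp2
      have hlim : Tendsto (fun n => p.1 + ε n • p.2) atTop (𝓝 p.1) := by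
        have := (hε0.smul_const p.2).const_add p.1
        simpa using this
      have hin := hlim.eventually ((ocube_open d).mem_nhds hp)
      have hdiff : Tendsto (fun n => |φ (p.1 + ε n • p.2) - φ p.1| * Mη) atTop (𝓝 0) := by
        have := ((((hφ.tendsto p.1).comp hlim).sub_const (φ p.1)).abs).mul_const Mη
        simpa using this
      refine squeeze_zero' (Eventually.of_forall fun n => abs_nonneg _) ?_ hdiff
      filter_upwards [hin] with n h1
      have h3 := ocube_sub d h1
      simp only [hR]
      rw [fr_of_mem h3, fr_of_mem hp2.1]
      have e : (ε n)⁻¹ • (p.1 + ε n • p.2) = p.2 + (ε n)⁻¹ • p.1 := by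
        rw [smul_add, smul_smul, inv_mul_cancel₀ (hε n).ne', one_smul]; abel
      rw [e, ← sub_mul, abs_mul]
      exact mul_le_mul_of_nonneg_left (hMη _) (abs_nonneg _)
  have h1 := UI_R (fun n => (hc n).measurable) hwb hUI hRm hRb hR0
  have h2 := (hf (fun x => φ (fr x)) (by fun_prop) ⟨Mφ, hMφ'⟩).mul_const (∫ y in cube d, η y)
  have h3 := h1.add h2
  have e0 : ∫ p, f p.1 * (φ p.1 * η p.2) ∂(cc d) =
      (∫ x in cube d, f x * φ (fr x)) * ∫ y in cube d, η y := by
    rw [← cc_mul (fun x => f x * φ (fr x)) η]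
    refine integral_congr_ae ?_
    filter_upwards [cc_ae_mem d] with p hp
    rw [fr_of_mem hp.1]; ring
  rw [zero_add, ← e0] at h3
  refine h3.congr fun n => ?_
  obtain ⟨W, hW⟩ := hwb n
  have hW0 : 0 ≤ W := (abs_nonneg _).trans (hW 0)
  have hwm := (hc n).measurable
  have hbd2 : ∀ a x y, |w n a * (φ (fr x) * η y)| ≤ W * (Mφ * Mη) := fun a x y => by
    rw [abs_mul]; exact mul_le_mul (hW a) (hbd x y) (abs_nonneg _) hW0
  have e1 : ∫ p, w n (p.1 + (-ε n) • p.2) * (φ p.1 * η ((ε n)⁻¹ • p.1)) ∂(cc d) =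
      ∫ p, w n (p.1 + (-ε n) • p.2) * (φ (fr p.1) * η ((ε n)⁻¹ • fr p.1)) ∂(cc d) := by
    refine integral_congr_ae ?_
    filter_upwards [cc_ae_mem d] with p hp
    rw [fr_of_mem hp.1]
  have e2 := shear_int (-ε n) (F := fun p => w n p.1 *
      (φ (fr (p.1 + ε n • p.2)) * η ((ε n)⁻¹ • fr (p.1 + ε n • p.2)))) (by fun_prop)
      ⟨W * (Mφ * Mη), fun p => hbd2 _ _ _⟩ (fun z x k => by
        have h1 := hwp n x k
        have h2 := (ZPer_comp_fr (fun x => φ x * η ((ε n)⁻¹ • x))).comp_add (ε n • z) x k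
        simp only at h1 h2 ⊢
        rw [h1, h2])
  simp only [neg_smul, neg_add_cancel_right] at e2 e1 ⊢
  rw [e1, e2]
  have e3 : (∫ x in cube d, w n x * φ (fr x)) * ∫ y in cube d, η y =
      ∫ p, w n p.1 * (φ (fr p.1) * η (p.2 + (ε n)⁻¹ • p.1)) ∂(cc d) := by
    rw [integral_prod, ← integral_mul_const]
    · refine integral_congr_ae (Eventually.of_forall fun x => ?_)
      simp only
      rw [integral_const_mul, integral_const_mul, per_int hηp]
      ring
    · exact bdd_int (M := W * (Mφ * Mη)) (by fun_prop) fun p => hbd2 _ _ _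
  rw [e3, ← integral_add]
  · refine integral_congr_ae (Eventually.of_forall fun p => ?_)
    simp only [hR]; ring
  · refine bdd_int (M := W * (2 * (Mφ * Mη))) ?_ fun p => ?_
    · have := hRm n; fun_prop
    · rw [abs_mul]; exact mul_le_mul (hW _) (hRb n p) (abs_nonneg _) hW0
  · exact bdd_int (M := W * (Mφ * Mη)) (by fun_prop) fun p => hbd2 _ _ _

/-- the limit identity -/
theorem cor_limit {d : ℕ} (i : Fin d) {ε : ℕ → ℝ} (hε : ∀ n, 0 < ε n)
    (hε0 : Tendsto ε atTop (𝓝 0)) {u : ℕ → (Fin d → ℝ) → ℝ}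
    (hu : ∀ n, ContDiff ℝ (⊤ : ℕ∞) (u n)) (hp : ∀ n, ZPer (u n))
    (hUI : UI (fun n => pder i (u n))) (hUIc : UI (fun n => cor (-ε n) (u n)))
    {G U : (Fin d → ℝ) × (Fin d → ℝ) → ℝ} {f : (Fin d → ℝ) → ℝ}
    (hG : ∀ g : (Fin d → ℝ) × (Fin d → ℝ) → ℝ, Measurable g → (∃ M, ∀ x, |g x| ≤ M) →
        Tendsto (fun n => ∫ x, unf (ε n) (pder i (u n)) x * g x ∂(cc d)) atTop
          (𝓝 (∫ x, G x * g x ∂(cc d))))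
    (hU : ∀ g : (Fin d → ℝ) × (Fin d → ℝ) → ℝ, Measurable g → (∃ M, ∀ x, |g x| ≤ M) →
        Tendsto (fun n => ∫ x, unf (ε n) (cor (-ε n) (u n)) x * g x ∂(cc d)) atTop
          (𝓝 (∫ x, U x * g x ∂(cc d))))
    (hf : ∀ g : (Fin d → ℝ) → ℝ, Measurable g → (∃ M, ∀ x, |g x| ≤ M) →
        Tendsto (fun n => ∫ x in cube d, pder i (u n) x * g x) atTop
          (𝓝 (∫ x in cube d, f x * g x)))
    {φ η : (Fin d → ℝ) → ℝ}
    (hφ : ContDiff ℝ (⊤ : ℕ∞) φ) (hcs : HasCompactSupport φ) (hsup : tsupport φ ⊆ ocube d)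
    (hη : ContDiff ℝ (⊤ : ℕ∞) η) (hηp : ZPer η) :
    - ∫ p, U p * (φ p.1 * pder i η p.2) ∂(cc d) =
      - (∫ p, G p * (φ p.1 * η p.2) ∂(cc d)) + ∫ p, f p.1 * (φ p.1 * η p.2) ∂(cc d) := by
  have hcφ := hφ.continuous
  have hcpφ := (pder_contDiff i hφ).continuous
  have hcη := hη.continuous
  have hcpη := (pder_contDiff i hη).continuous
  have hcpu := fun n => (pder_contDiff i (hu n)).continuous
  have hccor := fun n => cor_cont (-ε n) (hu n).continuous (hp n)
  have hpcor := fun n => cor_per (-ε n) (hp n)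
  have A1 := ts_conv hε hε0 hccor hpcor hUIc hU (ψ := fun p => φ p.1 * pder i η p.2)
    (by fun_prop) (fun x y k => by simp only; rw [pder_per i hηp y k])
  have A2 := ts_conv hε hε0 hccor hpcor hUIc hU (ψ := fun p => pder i φ p.1 * η p.2)
    (by fun_prop) (fun x y k => by simp only; rw [hηp y k])
  have A3 := ts_conv hε hε0 hcpu (fun n => pder_per i (hp n)) hUI hG
    (ψ := fun p => φ p.1 * η p.2)
    (by fun_prop) (fun x y k => by simp only; rw [hηp y k])
  have A4 := T4_lim hε hε0 hcpu (fun n => pder_per i (hp n)) hUI hf hcφ hcη hηp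
  have L := A1.neg.sub (hε0.mul A2)
  have R := A3.neg.add A4
  rw [zero_mul, sub_zero] at L
  refine tendsto_nhds_unique L (R.congr fun n => ?_)
  exact (cor_ident i (hε n) (hu n) (hp n) hφ hcs hsup hη).symm



theorem dense_smooth (d : ℕ) : ∃ D : ℕ → (Fin d → ℝ) → ℝ,
    (∀ k, ContDiff ℝ (⊤ : ℕ∞) (D k) ∧ ZPer (D k)) ∧
    ∀ η : (Fin d → ℝ) → ℝ, ContDiff ℝ (⊤ : ℕ∞) η → ZPer η → ∀ δ > 0, ∃ k,
      (∀ x, |η x - D k x| ≤ δ) ∧ ∀ i x, |pder i η x - pder i (D k) x| ≤ δ := by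
  let X := Set.Icc (0 : Fin d → ℝ) 1
  have : CompactSpace X := isCompact_iff_compactSpace.mp isCompact_Icc
  let S := {η : (Fin d → ℝ) → ℝ // ContDiff ℝ (⊤ : ℕ∞) η ∧ ZPer η}
  let Y := C(X, ℝ) × (Fin d → C(X, ℝ))
  let J : S → Y := fun η => (⟨fun x => η.1 x, η.2.1.continuous.comp continuous_subtype_val⟩,
    fun i => ⟨fun x => pder i η.1 x, (pder_contDiff i η.2.1).continuous.comp continuous_subtype_val⟩)
  have hsep : TopologicalSpace.SeparableSpace (Set.range J) := inferInstance
  have hne : Nonempty (Set.range J) :=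
    ⟨J ⟨fun _ => 0, contDiff_const, fun _ _ => rfl⟩, Set.mem_range_self _⟩
  let e : ℕ → Set.range J := TopologicalSpace.denseSeq (Set.range J)
  have hd : DenseRange e := TopologicalSpace.denseRange_denseSeq _
  choose D hD using fun k => (e k).2
  refine ⟨fun k => (D k).1, fun k => (D k).2, fun η h1 h2 δ hδ => ?_⟩
  obtain ⟨k, hk⟩ := hd.exists_dist_lt ⟨J ⟨η, h1, h2⟩, Set.mem_range_self _⟩ hδ
  rw [Subtype.dist_eq] at hk
  simp only at hk
  rw [← hD k] at hk
  have hmem : ∀ x : Fin d → ℝ, fr x ∈ X := fun x => cube_subset_Icc d (fr_mem x)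
  refine ⟨k, fun x => ?_, fun i x => ?_⟩
  · have h3 : dist (J ⟨η, h1, h2⟩).1 (J (D k)).1 < δ := (le_max_left _ _).trans_lt hk
    have := ((ContinuousMap.dist_apply_le_dist (⟨fr x, hmem x⟩ : X)).trans_lt h3).le
    show |η x - (D k).1 x| ≤ δ
    rw [← h2.fr x, ← (D k).2.2.fr x, ← Real.dist_eq]
    exact this
  · have h3 : dist ((J ⟨η, h1, h2⟩).2 i) ((J (D k)).2 i) < δ :=
      ((dist_le_pi_dist _ _ i).trans (le_max_right _ _)).trans_lt hk
    have := ((ContinuousMap.dist_apply_le_dist (⟨fr x, hmem x⟩ : X)).trans_lt h3).le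
    show |pder i η x - pder i (D k).1 x| ≤ δ
    rw [← (pder_per i h2).fr x, ← (pder_per i (D k).2.2).fr x, ← Real.dist_eq]
    exact this

theorem loc_zero {d : ℕ} {k : (Fin d → ℝ) → ℝ} (hk : Integrable k (volume.restrict (cube d)))
    (h : ∀ φ : (Fin d → ℝ) → ℝ, ContDiff ℝ (⊤ : ℕ∞) φ → HasCompactSupport φ →
      tsupport φ ⊆ ocube d → ∫ x in cube d, k x * φ x = 0) :
    ∀ᵐ x ∂(volume.restrict (cube d)), k x = 0 := by
  have h1 : ∀ᵐ x ∂(volume : Measure (Fin d → ℝ)), x ∈ ocube d → k x = 0 := by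
    refine (ocube_open d).ae_eq_zero_of_integral_contDiff_smul_eq_zero ?_ ?_
    · exact (IntegrableOn.mono_set hk (ocube_sub d)).locallyIntegrableOn
    · intro φ h1 h2 h3
      rw [← h φ h1 h2 h3]
      rw [setIntegral_eq_integral_of_forall_compl_eq_zero]
      · refine integral_congr_ae (Eventually.of_forall fun x => ?_)
        simp only [smul_eq_mul]; ring
      · intro x hx
        rw [image_eq_zero_of_notMem_tsupport fun h => hx (ocube_sub d (h3 h)), mul_zero]
  filter_upwards [ae_restrict_of_ae h1, ocube_ae d] with x hx hx2
  exact hx hx2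

theorem corr_ae {d : ℕ} {U : (Fin d → ℝ) × (Fin d → ℝ) → ℝ}
    {G : Fin d → (Fin d → ℝ) × (Fin d → ℝ) → ℝ} {f : Fin d → (Fin d → ℝ) → ℝ}
    (hUi : Integrable U (cc d)) (hGi : ∀ i, Integrable (G i) (cc d))
    (hfi : ∀ i, Integrable (f i) (volume.restrict (cube d)))
    (h : ∀ i, ∀ φ η : (Fin d → ℝ) → ℝ, ContDiff ℝ (⊤ : ℕ∞) φ → HasCompactSupport φ →
      tsupport φ ⊆ ocube d → ContDiff ℝ (⊤ : ℕ∞) η → ZPer η →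
      - ∫ p, U p * (φ p.1 * pder i η p.2) ∂(cc d) =
      - (∫ p, G i p * (φ p.1 * η p.2) ∂(cc d)) + ∫ p, f i p.1 * (φ p.1 * η p.2) ∂(cc d)) :
    ∀ᵐ x ∂(volume.restrict (cube d)), ∀ i, ∀ η : (Fin d → ℝ) → ℝ, ContDiff ℝ (⊤ : ℕ∞) η → ZPer η →
      ∫ y in cube d, (- U (x, y)) * pder i η y = - ∫ y in cube d, (G i (x, y) - f i x) * η y := by
  obtain ⟨D, hD, hdense⟩ := dense_smooth d
  -- integrand
  have hfi2 : ∀ i, Integrable (fun p : (Fin d → ℝ) × (Fin d → ℝ) => f i p.1) (cc d) :=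
    fun i => (hfi i).comp_fst _
  have hintg : ∀ i k, Integrable (fun p : (Fin d → ℝ) × (Fin d → ℝ) =>
      (- U p) * pder i (D k) p.2 + (G i p - f i p.1) * D k p.2) (cc d) := by
    intro i k
    obtain ⟨M1, hM1⟩ := per_bdd (hD k).1.continuous (hD k).2
    obtain ⟨M2, hM2⟩ := per_bdd (pder_contDiff i (hD k).1).continuous (pder_per i (hD k).2)
    have c1 := (hD k).1.continuous
    have c2 := (pder_contDiff i (hD k).1).continuous
    refine (hUi.neg.mul_bdd (c := M2) ?_ (Eventually.of_forall fun p => hM2 _)).add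
      (((hGi i).sub (hfi2 i)).mul_bdd (c := M1) ?_ (Eventually.of_forall fun p => hM1 _))
    · exact Continuous.aestronglyMeasurable (by fun_prop)
    · exact Continuous.aestronglyMeasurable (by fun_prop)
  have hzero : ∀ i k, ∀ᵐ x ∂(volume.restrict (cube d)),
      ∫ y in cube d, ((- U (x, y)) * pder i (D k) y + (G i (x, y) - f i x) * D k y) = 0 := by
    intro i k
    refine loc_zero (hintg i k).integral_prod_left fun φ h1 h2 h3 => ?_
    obtain ⟨M1, hM1⟩ := per_bdd (hD k).1.continuous (hD k).2
    obtain ⟨M2, hM2⟩ := per_bdd (pder_contDiff i (hD k).1).continuous (pder_per i (hD k).2)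
    obtain ⟨M3, hM3⟩ := h2.exists_bound_of_continuous h1.continuous
    have c0 := h1.continuous
    have c1 := (hD k).1.continuous
    have c2 := (pder_contDiff i (hD k).1).continuous
    have b1 : ∀ p : (Fin d → ℝ) × (Fin d → ℝ), ‖φ p.1 * D k p.2‖ ≤ M3 * M1 := fun p => by
      rw [norm_mul]; exact mul_le_mul (hM3 _) (hM1 _) (norm_nonneg _) ((norm_nonneg _).trans (hM3 0))
    have b2 : ∀ p : (Fin d → ℝ) × (Fin d → ℝ), ‖φ p.1 * pder i (D k) p.2‖ ≤ M3 * M2 := fun p => by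
      rw [norm_mul]; exact mul_le_mul (hM3 _) (hM2 _) (norm_nonneg _) ((norm_nonneg _).trans (hM3 0))
    have m1 : AEStronglyMeasurable (fun p : (Fin d → ℝ) × (Fin d → ℝ) => φ p.1 * D k p.2) (cc d) :=
      Continuous.aestronglyMeasurable (by fun_prop)
    have m2 : AEStronglyMeasurable (fun p : (Fin d → ℝ) × (Fin d → ℝ) =>
      φ p.1 * pder i (D k) p.2) (cc d) := Continuous.aestronglyMeasurable (by fun_prop)
    have i1 := hUi.mul_bdd (c := M3 * M2) m2 (Eventually.of_forall b2)
    have i2 := (hGi i).mul_bdd (c := M3 * M1) m1 (Eventually.of_forall b1)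
    have i3 := (hfi2 i).mul_bdd (c := M3 * M1) m1 (Eventually.of_forall b1)
    have hh := h i φ (D k) h1 h2 h3 (hD k).1 (hD k).2
    have e : ∫ x in cube d, (∫ y in cube d, ((- U (x, y)) * pder i (D k) y +
        (G i (x, y) - f i x) * D k y)) * φ x =
        - (∫ p, U p * (φ p.1 * pder i (D k) p.2) ∂(cc d)) +
        ((∫ p, G i p * (φ p.1 * D k p.2) ∂(cc d)) - ∫ p, f i p.1 * (φ p.1 * D k p.2) ∂(cc d)) := by
      have i1n : Integrable (fun p => -(U p * (φ p.1 * pder i (D k) p.2))) (cc d) := i1.neg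
      have i23 : Integrable (fun p => G i p * (φ p.1 * D k p.2) -
        f i p.1 * (φ p.1 * D k p.2)) (cc d) := i2.sub i3
      have i123 : Integrable (fun p => -(U p * (φ p.1 * pder i (D k) p.2)) +
        (G i p * (φ p.1 * D k p.2) - f i p.1 * (φ p.1 * D k p.2))) (cc d) := i1n.add i23
      rw [← integral_neg, ← integral_sub i2 i3, ← integral_add i1n i23,
        integral_prod _ i123]
      refine integral_congr_ae (Eventually.of_forall fun x => ?_)
      simp only
      rw [← integral_mul_const]
      refine integral_congr_ae (Eventually.of_forall fun y => ?_)
      simp only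
      ring
    rw [e, hh]; ring
  have hU1 := hUi.prod_right_ae
  have hG1 : ∀ᵐ x ∂(volume.restrict (cube d)), ∀ i, Integrable (fun y => G i (x, y))
      (volume.restrict (cube d)) := ae_all_iff.mpr fun i => (hGi i).prod_right_ae
  have hz := ae_all_iff.mpr fun i => ae_all_iff.mpr fun k => hzero i k
  filter_upwards [hU1, hG1, hz] with x hUx hGx hzx i η h1 h2
  have c1 := h1.continuous
  have c2 := (pder_contDiff i h1).continuous
  have hGf : Integrable (fun y => G i (x, y) - f i x) (volume.restrict (cube d)) :=
    (hGx i).sub (integrable_const _)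
  have prodint : ∀ (A b : (Fin d → ℝ) → ℝ), Integrable A (volume.restrict (cube d)) →
      Continuous b → ZPer b → Integrable (fun y => A y * b y) (volume.restrict (cube d)) := by
    intro A b hA hb hbp
    obtain ⟨M, hM⟩ := per_bdd hb hbp
    exact hA.mul_bdd (c := M) hb.aestronglyMeasurable (Eventually.of_forall fun y => hM y)
  have i1 := prodint _ _ hUx.neg c2 (pder_per i h2)
  have i2 := prodint _ _ hGf c1 h2
  simp only [Pi.neg_apply] at i1
  suffices hs : ∫ y in cube d, ((- U (x, y)) * pder i η y + (G i (x, y) - f i x) * η y) = 0 by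
    rw [integral_add i1 i2] at hs
    linarith
  set Q := ∫ y in cube d, (|U (x, y)| + |G i (x, y) - f i x|) with hQ
  have hQ0 : 0 ≤ Q := integral_nonneg fun y => by positivity
  have bound : ∀ δ > 0, |∫ y in cube d, ((- U (x, y)) * pder i η y +
      (G i (x, y) - f i x) * η y)| ≤ δ * Q := by
    intro δ hδ
    obtain ⟨k, hk1, hk2⟩ := hdense η h1 h2 δ hδ
    have j1 := prodint _ _ hUx.neg (pder_contDiff i (hD k).1).continuous (pder_per i (hD k).2)
    have j2 := prodint _ _ hGf (hD k).1.continuous (hD k).2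
    simp only [Pi.neg_apply] at j1
    have i12 : Integrable (fun y => -U (x, y) * pder i η y + (G i (x, y) - f i x) * η y)
      (volume.restrict (cube d)) := i1.add i2
    have j12 : Integrable (fun y => -U (x, y) * pder i (D k) y + (G i (x, y) - f i x) * D k y)
      (volume.restrict (cube d)) := j1.add j2
    have := hzx i k
    rw [← sub_zero (∫ y in cube d, ((- U (x, y)) * pder i η y +
      (G i (x, y) - f i x) * η y)), ← this, ← integral_sub i12 j12, hQ,
      ← integral_const_mul]
    refine abs_integral_le_integral_abs.trans ?_
    refine integral_mono (i12.sub j12).abs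
      ((hUx.abs.add hGf.abs).const_mul _) fun y => ?_
    simp only
    have e : -U (x, y) * pder i η y + (G i (x, y) - f i x) * η y -
        (-U (x, y) * pder i (D k) y + (G i (x, y) - f i x) * D k y) =
        -U (x, y) * (pder i η y - pder i (D k) y) + (G i (x, y) - f i x) * (η y - D k y) := by ring
    rw [e]
    refine (abs_add_le _ _).trans ?_
    rw [abs_mul, abs_mul, abs_neg, mul_add, mul_comm δ, mul_comm δ]
    exact add_le_add (mul_le_mul_of_nonneg_left (hk2 i y) (abs_nonneg _))
      (mul_le_mul_of_nonneg_left (hk1 y) (abs_nonneg _))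
  by_contra hne
  have hpos := abs_pos.mpr hne
  set T := |∫ y in cube d, ((- U (x, y)) * pder i η y + (G i (x, y) - f i x) * η y)| with hT
  have := bound (T / (2 * (Q + 1))) (by positivity)
  rw [div_mul_eq_mul_div, le_div_iff₀ (by positivity)] at this
  nlinarith



theorem abs_rpow_int {Ω : Type*} [MeasurableSpace Ω] {μ : Measure Ω} [IsFiniteMeasure μ]
    {F : Ω → ℝ} (hF : Measurable F) {q : ℝ} (hq : 1 ≤ q) {r : ℕ} (hr : Even r) (hqr : q ≤ r)
    (hi : Integrable (fun x => F x ^ r) μ) : Integrable (fun x => |F x| ^ q) μ := by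
  refine Integrable.mono' ((integrable_const (1 : ℝ)).add hi) ?_ (Eventually.of_forall fun x => ?_)
  · exact ((measurable_norm.comp hF).pow_const q).aestronglyMeasurable
  · have h0 := abs_nonneg (F x)
    rw [Real.norm_of_nonneg (Real.rpow_nonneg h0 _)]
    simp only [Pi.add_apply]
    rw [← hr.pow_abs]
    rcases le_total (|F x|) 1 with h | h
    · have := Real.rpow_le_one h0 h (by linarith : 0 ≤ q)
      have := pow_nonneg h0 r
      linarith
    · have := Real.rpow_le_rpow_of_exponent_le h hqr
      rw [Real.rpow_natCast] at this
      linarith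

theorem abs_pow_pder_le {d : ℕ} (i : Fin d) (u : (Fin d → ℝ) → ℝ) (x : Fin d → ℝ) :
    |pder i u x| ≤ gsum u x :=
  Finset.single_le_sum (f := fun i => |pder i u x|) (fun _ _ => abs_nonneg _) (Finset.mem_univ i)

theorem pder_pow_int {d : ℕ} (i : Fin d) {u : (Fin d → ℝ) → ℝ} (hu : ContDiff ℝ (⊤ : ℕ∞) u)
    (r : ℕ) : ∫ x in cube d, |pder i u x| ^ r ≤ ∫ x in cube d, gsum u x ^ r := by
  have c1 := (pder_contDiff i hu).continuous
  have c2 := gsum_cont hu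
  refine integral_mono (cont_int (by fun_prop)) (cont_int (by fun_prop)) fun x => ?_
  exact pow_le_pow_left₀ (abs_nonneg _) (abs_pow_pder_le i u x) r

theorem unif_weak {d : ℕ} {u : ℕ → (Fin d → ℝ) → ℝ} {u₀ : (Fin d → ℝ) → ℝ}
    (hc : ∀ n, Continuous (u n)) (hc0 : Continuous u₀)
    (hun : ∀ δ > 0, ∀ᶠ k in atTop, ∀ x, |u k x - u₀ x| ≤ δ) : WeakConvCube u u₀ := by
  rintro g hg ⟨M, hM⟩
  have hM0 : 0 ≤ M := (abs_nonneg _).trans (hM 0)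
  have hintg : ∀ v : (Fin d → ℝ) → ℝ, Continuous v →
      Integrable (fun x => v x * g x) (volume.restrict (cube d)) := fun v hv =>
    (cont_int hv).mul_bdd (c := M) hg.aestronglyMeasurable (Eventually.of_forall fun x => hM x)
  rw [Metric.tendsto_atTop']
  intro δ hδ
  have h1 : 0 < δ / (2 * (M + 1)) := by positivity
  obtain ⟨N, hN⟩ := eventually_atTop.mp (hun _ h1)
  refine ⟨N, fun n hn => ?_⟩
  rw [Real.dist_eq, ← integral_sub (hintg _ (hc n)) (hintg _ hc0)]
  have h2 : |∫ x in cube d, (u n x * g x - u₀ x * g x)| ≤ δ / (2 * (M + 1)) * M := by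
    have := norm_integral_le_of_norm_le_const (μ := volume.restrict (cube d))
      (f := fun x => u n x * g x - u₀ x * g x) (C := δ / (2 * (M + 1)) * M)
      (Eventually.of_forall fun x => by
        rw [← sub_mul, norm_mul]
        exact mul_le_mul (hN n hn.le x) (hM x) (abs_nonneg _) h1.le)
    simpa using this
  refine h2.trans_lt ?_
  rw [div_mul_eq_mul_div, div_lt_iff₀ (by positivity)]
  nlinarith

theorem core_int {d : ℕ} {F ψ : (Fin d → ℝ) × (Fin d → ℝ) → ℝ} (hF : Integrable F (cc d))
    (hψ : Continuous ψ) (hper : ∀ x, ZPer fun y => ψ (x, y)) :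
    Integrable (fun p => F p * ψ p) (cc d) := by
  obtain ⟨M, hM⟩ := bdd_cube hψ hper
  refine hF.mul_bdd (c := M) hψ.aestronglyMeasurable ?_
  filter_upwards [cc_ae_mem d] with p hp
  have := hM p.1 p.2
  rwa [fr_of_mem hp.1] at this

theorem cc_eq (d : ℕ) : cc d = (volume : Measure ((Fin d → ℝ) × (Fin d → ℝ))).restrict
    (cube d ×ˢ cube d) := by
  unfold cc
  rw [Measure.volume_eq_prod, Measure.prod_restrict]

theorem ts_final {d : ℕ} {ε : ℕ → ℝ} (hε : ∀ n, 0 < ε n) (hε0 : Tendsto ε atTop (𝓝 0))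
    {w : ℕ → (Fin d → ℝ) → ℝ} (hc : ∀ n, Continuous (w n))
    (hwp : ∀ n, ZPer (w n)) (hUI : UI w) {F : (Fin d → ℝ) × (Fin d → ℝ) → ℝ}
    (hFi : Integrable F (cc d))
    (hF : ∀ g : (Fin d → ℝ) × (Fin d → ℝ) → ℝ, Measurable g → (∃ M, ∀ x, |g x| ≤ M) →
        Tendsto (fun n => ∫ x, unf (ε n) (w n) x * g x ∂(cc d)) atTop
          (𝓝 (∫ x, F x * g x ∂(cc d))))
    (W : (Fin d → ℝ) → (Fin d → ℝ) → ℝ)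
    (hW : ∀ x ∈ cube d, ∀ y ∈ cube d, W x y = F (x, y)) : TwoScaleW ε w W := by
  intro ψ hψ
  have h := ts_conv hε hε0 hc hwp hUI hF (ψ := uncurry ψ) hψ.1.continuous hψ.2.2
  have e : ∫ p, F p * uncurry ψ p ∂(cc d) =
      ∫ x in cube d, ∫ y in cube d, W x y * ψ x y := by
    rw [integral_prod _ (core_int hFi hψ.1.continuous hψ.2.2)]
    refine setIntegral_congr_fun (cube_meas d) fun x hx => ?_
    refine setIntegral_congr_fun (cube_meas d) fun y hy => ?_
    simp only [hW x hx y hy, uncurry_apply_pair]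
  rw [e] at h
  exact h

theorem unf_pow_le {d : ℕ} {ε : ℝ} {w : (Fin d → ℝ) → ℝ} (hc : Continuous w) (hp : ZPer w)
    {r : ℕ} (hr : Even r) {C : ℝ} (hC : ∫ x in cube d, |w x| ^ r ≤ C) :
    ∫ p, unf ε w p ^ r ∂(cc d) ≤ C := by
  have hp2 : ZPer (fun x => w x ^ r) := fun x k => by simp only [hp x k]
  have h := unf_mean ε (w := fun x => w x ^ r) (hc.pow r).measurable
    (per_bdd (hc.pow r) hp2) hp2
  have e : ∫ p, unf ε w p ^ r ∂(cc d) = ∫ p, unf ε (fun x => w x ^ r) p ∂(cc d) := rfl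
  rw [e, h]
  simpa [hr.pow_abs] using hC



theorem core {d : ℕ} (q : ℝ) (hq : 1 ≤ q) {ε : ℕ → ℝ} (hε : ∀ n, 0 < ε n)
    (hε0 : Tendsto ε atTop (𝓝 0)) {u m : ℕ → (Fin d → ℝ) → ℝ}
    (hu : ∀ n, ContDiff ℝ (⊤ : ℕ∞) (u n)) (hup : ∀ n, ZPer (u n))
    (hm : ∀ n, Continuous (m n)) (hmp : ∀ n, ZPer (m n))
    (hu0 : ∀ n, ∫ x in cube d, u n x = 0) (hm1 : ∀ n, ∫ x in cube d, m n x = 1)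
    {Cr : ℕ → ℝ} (hCr : ∀ n r, ∫ x in cube d, gsum (u n) x ^ r ≤ Cr r)
    (hUIm : UI m) (hUIc : UI (fun n => cor (-ε n) (u n)))
    (hUIp : ∀ i, UI (fun n => pder i (u n)))
    {u₀ : (Fin d → ℝ) → ℝ} (hu₀c : Continuous u₀)
    (hun : ∀ δ > 0, ∀ᶠ k in atTop, ∀ x, |u k x - u₀ x| ≤ δ)
    {Fm U : (Fin d → ℝ) × (Fin d → ℝ) → ℝ} {G : Fin d → (Fin d → ℝ) × (Fin d → ℝ) → ℝ}
    {fm : (Fin d → ℝ) → ℝ} {f : Fin d → (Fin d → ℝ) → ℝ}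
    (hFmi : Integrable Fm (cc d)) (hUm : Measurable U) (hUi : Integrable U (cc d))
    (hGm : ∀ i, Measurable (G i)) (hGi : ∀ i, Integrable (G i) (cc d))
    (hfmi : Integrable fm (volume.restrict (cube d)))
    (hfme : ∀ i, Measurable (f i)) (hfi : ∀ i, Integrable (f i) (volume.restrict (cube d)))
    (hFm : ∀ g : (Fin d → ℝ) × (Fin d → ℝ) → ℝ, Measurable g → (∃ M, ∀ x, |g x| ≤ M) →
        Tendsto (fun n => ∫ x, unf (ε n) (m n) x * g x ∂(cc d)) atTop
          (𝓝 (∫ x, Fm x * g x ∂(cc d))))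
    (hU : ∀ g : (Fin d → ℝ) × (Fin d → ℝ) → ℝ, Measurable g → (∃ M, ∀ x, |g x| ≤ M) →
        Tendsto (fun n => ∫ x, unf (ε n) (cor (-ε n) (u n)) x * g x ∂(cc d)) atTop
          (𝓝 (∫ x, U x * g x ∂(cc d))))
    (hG : ∀ i, ∀ g : (Fin d → ℝ) × (Fin d → ℝ) → ℝ, Measurable g → (∃ M, ∀ x, |g x| ≤ M) →
        Tendsto (fun n => ∫ x, unf (ε n) (pder i (u n)) x * g x ∂(cc d)) atTop
          (𝓝 (∫ x, G i x * g x ∂(cc d))))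
    (hfm : WeakConvCube m fm) (hf : ∀ i, WeakConvCube (fun n => pder i (u n)) (f i)) :
    ∃ u₁ : (Fin d → ℝ) → (Fin d → ℝ) → ℝ, ∃ g₁ : (Fin d → ℝ) → (Fin d → ℝ) → Fin d → ℝ,
    ∃ M : (Fin d → ℝ) → (Fin d → ℝ) → ℝ,
      ((∫ x in cube d, u₀ x) = 0 ∧ (∀ i, WeakPDer i u₀ (f i)) ∧
        (∀ i, IntegrableOn (fun x => |f i x| ^ q) (cube d))) ∧
      ((∀ᵐ x ∂(volume.restrict (cube d)), ZPer (u₁ x) ∧ (∀ i, ZPer fun y => g₁ x y i) ∧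
          ∀ (i : Fin d) (ψ : (Fin d → ℝ) → ℝ), ContDiff ℝ (⊤ : ℕ∞) ψ → ZPer ψ →
            (∫ y in cube d, u₁ x y * pder i ψ y) = - ∫ y in cube d, g₁ x y i * ψ y) ∧
        IntegrableOn (fun z : (Fin d → ℝ) × (Fin d → ℝ) =>
          |u₁ z.1 z.2| ^ q + ∑ i, |g₁ z.1 z.2 i| ^ q) (cube d ×ˢ cube d)) ∧
      (IntegrableOn (uncurry M) (cube d ×ˢ cube d) ∧
        (∫ x in cube d, ∫ y in cube d, M x y) = 1) ∧
      Tendsto (fun k => ⨆ x, |u k x - u₀ x|) atTop (𝓝 0) ∧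
      WeakConvCube u u₀ ∧
      (∀ i, TwoScaleW ε (fun k => pder i (u k)) fun x y => f i x + g₁ x y i) ∧
      TwoScaleW ε m M ∧
      WeakConvCube m (fun x => ∫ y in cube d, M x y) := by
  have hpc : ∀ i n, Continuous (pder i (u n)) := fun i n => (pder_contDiff i (hu n)).continuous
  have hpp : ∀ i n, ZPer (pder i (u n)) := fun i n => pder_per i (hup n)
  have hwu : WeakConvCube u u₀ := unif_weak (fun n => (hu n).continuous) hu₀c hun
  -- exponent
  obtain ⟨r, hr, hr0, hqr⟩ : ∃ r : ℕ, Even r ∧ r ≠ 0 ∧ q ≤ r := by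
    obtain ⟨n, hn⟩ := exists_nat_ge q
    refine ⟨2 * (n + 1), even_two_mul _, by omega, ?_⟩
    push_cast
    have : (0 : ℝ) ≤ n := Nat.cast_nonneg n
    linarith
  have hpow : ∀ i n, ∫ x in cube d, |pder i (u n) x| ^ r ≤ Cr r := fun i n =>
    (pder_pow_int i (hu n) r).trans (hCr n r)
  have hfr : ∀ i, Integrable (fun x => f i x ^ r) (volume.restrict (cube d)) := fun i =>
    weak_limit_Lr _ (fun n => pder i (u n)) (f i) (fun n => (hpc i n).measurable) (hfme i) (hfi i)
      (fun n => per_bdd (hpc i n) (hpp i n)) r hr hr0 (Cr r)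
      (fun n => by simpa [hr.pow_abs] using hpow i n) (hf i)
  have hunfb : ∀ (s : ℝ) (w : (Fin d → ℝ) → ℝ), Continuous w → ZPer w →
      ∃ M, ∀ p, |unf s w p| ≤ M := fun s w h1 h2 => by
    obtain ⟨M, hM⟩ := per_bdd h1 h2
    exact ⟨M, fun p => hM _⟩
  have hGr : ∀ i, Integrable (fun p => G i p ^ r) (cc d) := fun i =>
    weak_limit_Lr _ (fun n => unf (ε n) (pder i (u n))) (G i)
      (fun n => unf_meas _ (hpc i n).measurable) (hGm i) (hGi i)
      (fun n => hunfb _ _ (hpc i n) (hpp i n)) r hr hr0 (Cr r)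
      (fun n => unf_pow_le (hpc i n) (hpp i n) hr (hpow i n)) (hG i)
  have hcc : ∀ n, Continuous (cor (-ε n) (u n)) := fun n => cor_cont _ (hu n).continuous (hup n)
  have hcp : ∀ n, ZPer (cor (-ε n) (u n)) := fun n => cor_per _ (hup n)
  have hUr : Integrable (fun p => U p ^ r) (cc d) :=
    weak_limit_Lr _ (fun n => unf (ε n) (cor (-ε n) (u n))) U
      (fun n => unf_meas _ (hcc n).measurable) hUm hUi
      (fun n => hunfb _ _ (hcc n) (hcp n)) r hr hr0 (Cr r)
      (fun n => unf_pow_le (hcc n) (hcp n) hr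
        ((cor_pow_int (neg_ne_zero.mpr (hε n).ne') (hu n) (hup n) r).trans (hCr n r))) hU
  have hGfr : ∀ i, Integrable (fun p : (Fin d → ℝ) × (Fin d → ℝ) => (G i p - f i p.1) ^ r) (cc d) := by
    intro i
    have h1 : Integrable (fun p : (Fin d → ℝ) × (Fin d → ℝ) => f i p.1 ^ r) (cc d) :=
      (hfr i).comp_fst _
    refine Integrable.mono' (((hGr i).add h1).const_mul (2 ^ (r - 1))) ?_
      (Eventually.of_forall fun p => ?_)
    · exact (((hGm i).sub ((hfme i).comp measurable_fst)).pow_const r).aestronglyMeasurable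
    · rw [Real.norm_of_nonneg (hr.pow_nonneg _), ← hr.pow_abs]
      simp only [Pi.add_apply]
      rw [← hr.pow_abs (G i p), ← hr.pow_abs (f i p.1)]
      exact (pow_le_pow_left₀ (abs_nonneg _) (abs_sub _ _) r).trans
        (add_pow_le (abs_nonneg _) (abs_nonneg _) r)
  have hfr' : ∀ i, Measurable fun p : (Fin d → ℝ) × (Fin d → ℝ) => G i p - f i p.1 :=
    fun i => (hGm i).sub ((hfme i).comp measurable_fst)
  have hmean := fun {W : (Fin d → ℝ) → (Fin d → ℝ) → ℝ} => ts_final hε hε0 hm hmp hUIm hFmi hFm W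
  have hTSm : TwoScaleW ε m (fun x y => Fm (x, y)) := hmean fun _ _ _ _ => rfl
  refine ⟨fun x y => - U (x, fr y), fun x y i => G i (x, fr y) - f i x, fun x y => Fm (x, y),
    ⟨?_, ?_, ?_⟩, ⟨?_, ?_⟩, ⟨?_, ?_⟩, ?_, hwu, ?_, hTSm, ?_⟩
  · have h := hwu (fun _ => 1) measurable_const ⟨1, fun _ => by simp⟩
    simp only [mul_one, hu0] at h
    exact tendsto_nhds_unique h tendsto_const_nhds
  · intro i φ hφ hφp
    have h1 := hwu (pder i φ) (pder_contDiff i hφ).continuous.measurable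
      (per_bdd (pder_contDiff i hφ).continuous (pder_per i hφp))
    have h2 := (hf i φ hφ.continuous.measurable (per_bdd hφ.continuous hφp)).neg
    refine tendsto_nhds_unique h1 (h2.congr fun n => ?_)
    rw [ibp_per i (hu n) (hup n) hφ hφp]
  · intro i
    exact abs_rpow_int (hfme i) hq hr hqr (hfr i)
  · have h := corr_ae hUi hGi hfi (fun i φ η h1 h2 h3 h4 h5 =>
      cor_limit i hε hε0 hu hup (hUIp i) hUIc (hG i) hU (hf i) h1 h2 h3 h4 h5)
    filter_upwards [h] with x hx
    refine ⟨ZPer_comp_fr fun y => -U (x, y), fun i => ZPer_comp_fr fun y => G i (x, y) - f i x,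
      fun i ψ h1 h2 => ?_⟩
    have := hx i ψ h1 h2
    rw [setIntegral_congr_fun (g := fun y => -U (x, y) * pder i ψ y) (cube_meas d), this,
      setIntegral_congr_fun (cube_meas d)]
    · intro y hy; simp only [fr_of_mem hy]
    · intro y hy; simp only [fr_of_mem hy]
  · rw [IntegrableOn, ← cc_eq]
    have h1 : Integrable (fun p => |U p| ^ q + ∑ i, |G i p - f i p.1| ^ q) (cc d) :=
      (abs_rpow_int hUm hq hr hqr hUr).add
        (integrable_finsetSum _ fun i _ => abs_rpow_int (hfr' i) hq hr hqr (hGfr i))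
    refine h1.congr ?_
    filter_upwards [cc_ae_mem d] with p hp
    simp only [fr_of_mem hp.2, abs_neg]
  · rw [IntegrableOn, ← cc_eq]
    exact hFmi
  · have h := hTSm (fun _ _ => 1) ⟨contDiff_const, fun _ _ _ => rfl, fun _ _ _ => rfl⟩
    simp only [mul_one, hm1] at h
    exact (tendsto_nhds_unique tendsto_const_nhds h).symm
  · rw [Metric.tendsto_atTop']
    intro δ hδ
    obtain ⟨N, hN⟩ := eventually_atTop.mp (hun (δ / 2) (by positivity))
    refine ⟨N, fun n hn => ?_⟩
    rw [Real.dist_eq, sub_zero, abs_of_nonneg (Real.iSup_nonneg fun x => abs_nonneg _)]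
    exact (ciSup_le (hN n hn.le)).trans_lt (by linarith)
  · intro i
    refine ts_final hε hε0 (hpc i) (hpp i) (hUIp i) (hGi i) (hG i) _ fun x _ y hy => ?_
    simp only [fr_of_mem hy]; ring
  · have hMi : Integrable (fun x => ∫ y in cube d, Fm (x, y)) (volume.restrict (cube d)) :=
      hFmi.integral_prod_left
    have hz := loc_zero (k := fun x => fm x - ∫ y in cube d, Fm (x, y)) (hfmi.sub hMi)
      (fun φ h1 h2 h3 => by
        obtain ⟨M3, hM3⟩ := h2.exists_bound_of_continuous h1.continuous
        have a1 := hfm φ h1.continuous.measurable ⟨M3, hM3⟩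
        have cφ := h1.continuous
        have hψc : Continuous fun p : (Fin d → ℝ) × (Fin d → ℝ) => φ p.1 := by fun_prop
        have hψp : ∀ x, ZPer fun y : Fin d → ℝ => (fun p : (Fin d → ℝ) × (Fin d → ℝ) => φ p.1) (x, y) :=
          fun _ _ _ => rfl
        have a2 := ts_conv hε hε0 hm hmp hUIm hFm hψc hψp
        have a3 := tendsto_nhds_unique a1 a2
        rw [integral_prod _ (core_int hFmi hψc hψp)] at a3
        simp only [integral_mul_const] at a3
        have k1 : Integrable (fun x => fm x * φ x) (volume.restrict (cube d)) :=
          hfmi.mul_bdd (c := M3) cφ.aestronglyMeasurable (Eventually.of_forall hM3)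
        have k2 : Integrable (fun x => (∫ y in cube d, Fm (x, y)) * φ x)
            (volume.restrict (cube d)) :=
          hMi.mul_bdd (c := M3) cφ.aestronglyMeasurable (Eventually.of_forall hM3)
        simp only [sub_mul]
        rw [integral_sub k1 k2, a3, sub_self])
    intro g hg hb
    have h := hfm g hg hb
    have e : ∫ x in cube d, (∫ y in cube d, Fm (x, y)) * g x = ∫ x in cube d, fm x * g x := by
      refine integral_congr_ae ?_
      filter_upwards [hz] with x hx
      have : fm x = ∫ y in cube d, Fm (x, y) := by linarith
      rw [this]
    rw [← e] at h
    exact h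


/-- compactness of the solutions `(u_ε, m_ε, H̄_ε)` of the oscillating MFG
system: along a subsequence, `u_ε → u_0` in `L^∞` and weakly in `W^{1,q}(𝕋^d)`,
`∇u_ε` weakly two-scale converges to `∇u_0 + ∇_y u_1`, `m_ε` weakly two-scale converges to
`m` (and weakly in `L^1` to `m_0 = ∫_𝒴 m dy`), and `H̄_ε(P) → H̄(P)`, where
`u_0 ∈ C^{0,α} ∩ W^{1,q}(𝕋^d)` has zero mean (with weak gradient `g₀`),
`u_1 ∈ L^q(𝕋^d; W^{1,q}_#(𝒴^d)/ℝ)` (with `y`-weak gradient `g₁`), and `∫∫ m = 1`. -/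
theorem stmt5 {d : ℕ} (P : Fin d → ℝ) (V : (Fin d → ℝ) → (Fin d → ℝ) → ℝ)
    (hV : SmoothV V) (q : ℝ) (hq : 1 ≤ q)
    (ε : ℕ → ℝ) (hεpos : ∀ n, 0 < ε n) (hε0 : Tendsto ε atTop (𝓝 0))
    (u m : ℕ → (Fin d → ℝ) → ℝ) (H : ℕ → ℝ)
    (hsol : ∀ n, SolvesMFG P V (ε n) (u n) (m n) (H n)) :
    ∃ α ∈ Set.Ioo (0:ℝ) 1,
    ∃ u₀ : (Fin d → ℝ) → ℝ, ∃ g₀ : (Fin d → ℝ) → Fin d → ℝ,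
    ∃ u₁ : (Fin d → ℝ) → (Fin d → ℝ) → ℝ, ∃ g₁ : (Fin d → ℝ) → (Fin d → ℝ) → Fin d → ℝ,
    ∃ M : (Fin d → ℝ) → (Fin d → ℝ) → ℝ, ∃ Hbar : ℝ, ∃ φ : ℕ → ℕ, StrictMono φ ∧
      -- u₀ ∈ C^{0,α}(𝕋^d) ∩ W^{1,q}(𝕋^d), with zero mean and weak gradient g₀ ∈ L^q
      (HolderCont α u₀ ∧ ZPer u₀ ∧ (∫ x in cube d, u₀ x) = 0 ∧
        (∀ i, WeakPDer i u₀ fun x => g₀ x i) ∧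
        (∀ i, IntegrableOn (fun x => |g₀ x i| ^ q) (cube d))) ∧
      -- u₁ ∈ L^q(𝕋^d; W^{1,q}_#(𝒴^d)/ℝ), with y-weak gradient g₁
      ((∀ᵐ x ∂(volume.restrict (cube d)), ZPer (u₁ x) ∧ (∀ i, ZPer fun y => g₁ x y i) ∧
          ∀ (i : Fin d) (ψ : (Fin d → ℝ) → ℝ), ContDiff ℝ (⊤ : ℕ∞) ψ → ZPer ψ →
            (∫ y in cube d, u₁ x y * pder i ψ y) = - ∫ y in cube d, g₁ x y i * ψ y) ∧
        IntegrableOn (fun z : (Fin d → ℝ) × (Fin d → ℝ) =>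
          |u₁ z.1 z.2| ^ q + ∑ i, |g₁ z.1 z.2 i| ^ q) (cube d ×ˢ cube d)) ∧
      -- m ∈ L^1(𝕋^d × 𝒴^d) with ∫∫ m = 1
      (IntegrableOn (uncurry M) (cube d ×ˢ cube d) ∧
        (∫ x in cube d, ∫ y in cube d, M x y) = 1) ∧
      -- u_ε → u₀ in L^∞(𝕋^d)
      Tendsto (fun k => ⨆ x, |u (φ k) x - u₀ x|) atTop (𝓝 0) ∧
      -- u_ε ⇀ u₀ weakly in W^{1,q}(𝕋^d)
      (WeakConvCube (fun k => u (φ k)) u₀ ∧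
        ∀ i, WeakConvCube (fun k x => pder i (u (φ k)) x) fun x => g₀ x i) ∧
      -- ∇u_ε two-scale converges to ∇u₀ + ∇_y u₁
      (∀ i, TwoScaleW (fun k => ε (φ k)) (fun k x => pder i (u (φ k)) x)
        fun x y => g₀ x i + g₁ x y i) ∧
      -- m_ε two-scale converges to m, and weakly in L^1 to m₀ = ∫_𝒴 m dy
      TwoScaleW (fun k => ε (φ k)) (fun k => m (φ k)) M ∧
      WeakConvCube (fun k => m (φ k)) (fun x => ∫ y in cube d, M x y) ∧
      -- H̄_ε(P) → H̄(P)
      Tendsto (fun k => H (φ k)) atTop (𝓝 Hbar) := by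
  obtain ⟨C, Cr, hap⟩ := apriori P hV
  have hs := fun n => hap _ _ _ _ (hsol n)
  set K := 4 * (1 + Cr (2 * d + 2)) with hK
  have hmor := fun n => morrey_holder (hsol n).1 (hsol n).2.1 ((hs n).2.2 (2 * d + 2))
  have hbd : ∀ n x, |u n x| ≤ K := by
    intro n x
    have hui := cont_int (d := d) (hsol n).1.continuous
    have e : u n x = ∫ y in cube d, (u n x - u n y) := by
      rw [integral_sub (integrable_const _) hui, (hsol n).2.2.2.2.2.2.2.1]
      simp
    rw [e]
    have := norm_integral_le_of_norm_le_const (μ := volume.restrict (cube d))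
      (f := fun y => u n x - u n y) (C := K) (Eventually.of_forall fun y => (hmor n x y).2)
    simpa using this
  obtain ⟨φ₁, hφ₁, u₀, hu₀p, hu₀H, hun₁⟩ := ascoli_per u (fun n => (hsol n).2.1) K
    (fun n x y => (hmor n x y).1) hbd
  obtain ⟨Hbar, -, φ₂, hφ₂, hH₂⟩ := (isCompact_Icc (a := -C) (b := C)).tendsto_subseq
    (x := fun n => H (φ₁ n)) (fun n => abs_le.mp (hs (φ₁ n)).1)
  let θ : ℕ → ℕ := fun n => φ₁ (φ₂ n)
  let w : Option (Option (Fin d)) → ℕ → (Fin d → ℝ) → ℝ := fun o n =>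
    match o with
    | none => m (θ n)
    | some none => cor (-ε (θ n)) (u (θ n))
    | some (some i) => pder i (u (θ n))
  have hUIm : ∀ θ : ℕ → ℕ, UI (fun n => m (θ n)) := fun θ =>
    UI_of_entropy (fun n => (hsol _).2.2.1.continuous) (fun n => (hsol _).2.2.2.2.1)
      (C := C) (fun n => (hs _).2.1)
  have hUIc : ∀ θ : ℕ → ℕ, UI (fun n => cor (-ε (θ n)) (u (θ n))) := fun θ =>
    UI_of_sq (fun n => cor_cont _ (hsol _).1.continuous (hsol _).2.1) (C := Cr 2)
      (fun n => (cor_pow_int (neg_ne_zero.mpr (hεpos _).ne') (hsol _).1 (hsol _).2.1 2).trans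
        ((hs _).2.2 2))
  have hUIp : ∀ (θ : ℕ → ℕ) i, UI (fun n => pder i (u (θ n))) := fun θ i =>
    UI_of_sq (fun n => (pder_contDiff i (hsol _).1).continuous) (C := Cr 2)
      (fun n => (pder_pow_int i (hsol _).1 2).trans ((hs _).2.2 2))
  obtain ⟨φ₃, hφ₃, F, f, hFm, hFi, hfm, hfi, hF, hf⟩ := package (ε := fun n => ε (θ n)) w
    (by
      rintro (_ | _ | i) n
      · exact (hsol _).2.2.1.continuous
      · exact cor_cont _ (hsol _).1.continuous (hsol _).2.1
      · exact (pder_contDiff i (hsol _).1).continuous)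
    (by
      rintro (_ | _ | i) n
      · exact (hsol _).2.2.2.1
      · exact cor_per _ (hsol _).2.1
      · exact pder_per i (hsol _).2.1)
    (by
      rintro (_ | _ | i)
      · exact hUIm θ
      · exact hUIc θ
      · exact hUIp θ i)
  have hmono : StrictMono (fun n => φ₁ (φ₂ (φ₃ n))) := hφ₁.comp (hφ₂.comp hφ₃)
  have hun : ∀ δ > 0, ∀ᶠ k in atTop, ∀ x, |u (φ₁ (φ₂ (φ₃ k))) x - u₀ x| ≤ δ := fun δ hδ =>
    (hφ₂.comp hφ₃).tendsto_atTop.eventually (hun₁ δ hδ)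
  have hu₀c : Continuous u₀ := by
    have ht : TendstoUniformly (fun k => u (φ₁ k)) u₀ atTop := by
      rw [Metric.tendstoUniformly_iff]
      intro δ hδ
      filter_upwards [hun₁ (δ / 2) (by positivity)] with k hk x
      rw [dist_comm, Real.dist_eq]
      linarith [hk x]
    exact ht.continuous (Frequently.of_forall fun k => (hsol _).1.continuous)
  obtain ⟨u₁, g₁, M, ⟨r1, r2, r3⟩, r4, r5, r6, r7, r8, r9, r10⟩ :=
    core (d := d) q hq (ε := fun n => ε (φ₁ (φ₂ (φ₃ n)))) (fun n => hεpos _)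
      (hε0.comp hmono.tendsto_atTop) (u := fun n => u (φ₁ (φ₂ (φ₃ n))))
      (m := fun n => m (φ₁ (φ₂ (φ₃ n)))) (fun n => (hsol _).1) (fun n => (hsol _).2.1)
      (fun n => (hsol _).2.2.1.continuous) (fun n => (hsol _).2.2.2.1)
      (fun n => (hsol _).2.2.2.2.2.2.2.1) (fun n => (hsol _).2.2.2.2.2.2.2.2)
      (fun n r => (hs _).2.2 r) (hUIm _) (hUIc _) (hUIp _) hu₀c hun
      (hFi none) (hFm (some none)) (hFi (some none))
      (fun i => hFm (some (some i))) (fun i => hFi (some (some i)))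
      (hfi none) (fun i => hfm (some (some i))) (fun i => hfi (some (some i)))
      (hF none) (hF (some none)) (fun i => hF (some (some i)))
      (hf none) (fun i => hf (some (some i)))
  exact ⟨1 / 2, ⟨by norm_num, by norm_num⟩, u₀, fun x i => f (some (some i)) x, u₁, g₁, M, Hbar,
    fun n => φ₁ (φ₂ (φ₃ n)), hmono, ⟨⟨K, hu₀H⟩, hu₀p, r1, r2, r3⟩, r4, r5, r6,
    ⟨r7, fun i => hf (some (some i))⟩, r8, r9, r10, hH₂.comp hφ₃.tendsto_atTop⟩
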